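/- arXiv:2002.02128 — 2 statements merged into one kernel-verified Lean document; each statement's English description precedes it below -/
import Mathlib

section
/- Let D be a principal ideal domain, R a polynomial ring in finitely many variables over D, A an 𝔸ⁿ-fibration over R, and W = (W₁,…,W_m) an m-tuple residual variable of A over R. Then A is a stably polynomial algebra over R[W]; that is, there exist r, s ∈ ℕ and an R[W]-algebra isomorphism between the polynomial ring in r variables over A and the polynomial ring in s variables over R[W]. -/
open TensorProduct

noncomputable section

/-- The residue field `κ(P) = R_P / P R_P` of a commutative ring `R` at a prime ideal `P`. -/
abbrev ResidueFieldAt (R : Type*) [CommRing R] (P : Ideal R) [P.IsPrime] : Type _ :=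
  IsLocalRing.ResidueField (Localization.AtPrime P)

/-- `A ⊗_R κ(P)` is a polynomial ring in `n` variables over `B ⊗_R κ(P)`
for every prime ideal `P` of `R`. -/
def FibersPolynomialOver (R B A : Type*) [CommRing R] [CommRing B] [CommRing A]
    [Algebra R B] [Algebra R A] [Algebra B A] [IsScalarTower R B A] (n : ℕ) : Prop :=
  ∀ (P : Ideal R) (_ : P.IsPrime),
    letI : Algebra (ResidueFieldAt R P ⊗[R] B) (ResidueFieldAt R P ⊗[R] A) :=
      (Algebra.TensorProduct.map (AlgHom.id R (ResidueFieldAt R P))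
        (IsScalarTower.toAlgHom R B A)).toRingHom.toAlgebra
    Nonempty ((ResidueFieldAt R P ⊗[R] A) ≃ₐ[ResidueFieldAt R P ⊗[R] B]
      MvPolynomial (Fin n) (ResidueFieldAt R P ⊗[R] B))

/-- `A` is an `𝔸ⁿ`-fibration over `R`: a finitely generated flat `R`-algebra all of whose
fibres are polynomial rings in `n` variables. -/
def IsAffineFibration (R A : Type*) [CommRing R] [CommRing A] [Algebra R A] (n : ℕ) : Prop :=
  Algebra.FiniteType R A ∧ Module.Flat R A ∧
  ∀ (P : Ideal R) (_ : P.IsPrime),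
    Nonempty ((ResidueFieldAt R P ⊗[R] A) ≃ₐ[ResidueFieldAt R P]
      MvPolynomial (Fin n) (ResidueFieldAt R P))

/-- `W` is an `m`-tuple residual variable of the `𝔸ⁿ`-fibration `A` over `R`. -/
def IsResidualVariable (R A : Type*) [CommRing R] [CommRing A] [Algebra R A]
    (n m : ℕ) (W : Fin m → A) : Prop :=
  AlgebraicIndependent R W ∧
  FibersPolynomialOver R (Algebra.adjoin R (Set.range W)) A (n - m)

/-- A module `M` over `A` is stably free if `M ⊕ Aˢ ≅ Aᵗ` for some `s, t`. -/
def IsStablyFree (A M : Type*) [CommRing A] [AddCommGroup M] [Module A M] : Prop :=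
  ∃ s t : ℕ, Nonempty ((M × (Fin s → A)) ≃ₗ[A] (Fin t → A))

end

/-!
Let `B = R[W]`. By Noetherian induction on the ideal `I ⊆ R` we show that, for some `r`, the ring
`A[r]` of polynomials in `r` variables over `A` has coordinates over `B` modulo `I`, that is, it is
a polynomial ring over `B` modulo `I`; the theorem is the case `I = 0`.

If `I` is not radical, a power of its radical lies in `I`, and coordinates modulo the radical
remain coordinates modulo `I` because `A` and `B` are flat. If `I` is radical, the coordinates of
the fibres over its minimal primes combine to coordinates after inverting some `π` that is regular
modulo `I`, while by induction some `A[r]` has coordinates modulo `I + (π)`. The two are patched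
after adjoining further variables; what makes this possible is that `Ω[A⁄B]` is stably free. Indeed
it is projective, as one sees on the fibres, and every finite `A`-module has a finite free
resolution: this property holds for `R` and for the fibres of `A`, and passes to `A` by dévissage
along the primes of `R`.
-/

namespace ResidualVariable

universe u v w

/-! ### Finite free resolutions -/

section FreeResolution

variable {A : Type u} [CommRing A]

/-- The submodule `K` of a free module `Aᵏ` has a finite free resolution of length less than `n`.
It is separate from `HasFreeResolutionLT` because a recursion on modules would have to change
universes when it passes from a module to its first syzygy. -/
def SyzygyHasFreeResolutionLT (A : Type*) [CommRing A] :
    ℕ → ∀ {k : ℕ}, Submodule A (Fin k → A) → Prop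
  | 0, _, K => Subsingleton K
  | n + 1, _, K => ∃ (j : ℕ) (f : (Fin j → A) →ₗ[A] K), Function.Surjective f ∧
      SyzygyHasFreeResolutionLT A n (LinearMap.ker f)

/-- The module `M` has a resolution by finite free modules of length less than `n`, so that only
the zero module has one of length less than `0`. -/
def HasFreeResolutionLT (A : Type*) [CommRing A] (n : ℕ) (M : Type*) [AddCommGroup M]
    [Module A M] : Prop :=
  match n with
  | 0 => Subsingleton M
  | n + 1 => ∃ (k : ℕ) (f : (Fin k → A) →ₗ[A] M), Function.Surjective f ∧
      SyzygyHasFreeResolutionLT A n (LinearMap.ker f)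

/-- The module `M` has a finite resolution by finite free modules. -/
def HasFiniteFreeResolution (A : Type*) [CommRing A] (M : Type*) [AddCommGroup M]
    [Module A M] : Prop :=
  ∃ n, HasFreeResolutionLT A n M

variable {n : ℕ} {M : Type v} {N : Type w} [AddCommGroup M] [Module A M] [AddCommGroup N]
  [Module A N]

theorem hasFreeResolutionLT_zero_iff : HasFreeResolutionLT A 0 M ↔ Subsingleton M := Iff.rfl

theorem hasFreeResolutionLT_succ_iff :
    HasFreeResolutionLT A (n + 1) M ↔ ∃ (k : ℕ) (f : (Fin k → A) →ₗ[A] M),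
      Function.Surjective f ∧ HasFreeResolutionLT A n (LinearMap.ker f) := by
  cases n <;> rfl

/-- The linear identification `Aᵃ × Aᵇ ≃ Aᵃ⁺ᵇ`. -/
noncomputable def finProdEquivFinAdd (A : Type*) [CommRing A] (a b : ℕ) :
    ((Fin a → A) × (Fin b → A)) ≃ₗ[A] (Fin (a + b) → A) :=
  (LinearEquiv.sumArrowLequivProdArrow (Fin a) (Fin b) A A).symm.trans
    (LinearEquiv.funCongrLeft A A finSumFinEquiv.symm)

namespace HasFreeResolutionLT

theorem of_linearEquiv (e : M ≃ₗ[A] N) (h : HasFreeResolutionLT A n M) :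
    HasFreeResolutionLT A n N := by
  cases n with
  | zero => exact e.symm.toEquiv.subsingleton_congr.2 h
  | succ n =>
    obtain ⟨k, f, hf, hker⟩ := h
    refine ⟨k, e.toLinearMap ∘ₗ f, e.surjective.comp hf, ?_⟩
    rwa [LinearEquiv.ker_comp]

theorem of_cover {k : ℕ} (e : N ≃ₗ[A] (Fin k → A)) (f : N →ₗ[A] M) (hf : Function.Surjective f)
    (h : HasFreeResolutionLT A n (LinearMap.ker f)) : HasFreeResolutionLT A (n + 1) M := by
  refine hasFreeResolutionLT_succ_iff.2
    ⟨k, f ∘ₗ e.symm.toLinearMap, hf.comp e.symm.surjective, h.of_linearEquiv ?_⟩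
  refine e.ofSubmodules _ _ ?_
  ext x
  simp

theorem one_of_free {k : ℕ} (e : M ≃ₗ[A] (Fin k → A)) : HasFreeResolutionLT A 1 M := by
  refine of_cover e LinearMap.id Function.surjective_id ?_
  rw [LinearMap.ker_id, hasFreeResolutionLT_zero_iff]
  infer_instance

theorem finite (h : HasFreeResolutionLT A n M) : Module.Finite A M := by
  cases n with
  | zero =>
    rw [hasFreeResolutionLT_zero_iff] at h
    infer_instance
  | succ n =>
    obtain ⟨k, f, hf, -⟩ := h
    exact Module.Finite.of_surjective f hf

theorem one_of_subsingleton [Subsingleton M] : HasFreeResolutionLT A 1 M :=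
  one_of_free (LinearEquiv.ofSubsingleton M (Fin 0 → A))

end HasFreeResolutionLT

theorem SyzygyHasFreeResolutionLT.succ {k : ℕ} {K : Submodule A (Fin k → A)}
    (h : SyzygyHasFreeResolutionLT A n K) : SyzygyHasFreeResolutionLT A (n + 1) K := by
  induction n generalizing k with
  | zero =>
    have : Subsingleton K := h
    exact HasFreeResolutionLT.one_of_subsingleton
  | succ n ih =>
    obtain ⟨j, f, hf, hker⟩ := h
    exact ⟨j, f, hf, ih hker⟩

theorem exists_horseshoe {P Q : Type*} [AddCommGroup P] [Module A P] [AddCommGroup Q] [Module A Q]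
    [Module.Projective A Q] {p : M →ₗ[A] N} (hp : Function.Surjective p)
    {f : P →ₗ[A] LinearMap.ker p} (hf : Function.Surjective f)
    {g : Q →ₗ[A] N} (hg : Function.Surjective g) :
    ∃ F : P × Q →ₗ[A] M, Function.Surjective F ∧
      ∃ q : LinearMap.ker F →ₗ[A] LinearMap.ker g, Function.Surjective q ∧
        Nonempty (LinearMap.ker f ≃ₗ[A] LinearMap.ker q) := by
  obtain ⟨s, hs⟩ := Module.projective_lifting_property p g hp
  have hs' (y : Q) : p (s y) = g y := LinearMap.congr_fun hs y
  let F : P × Q →ₗ[A] M := ((LinearMap.ker p).subtype ∘ₗ f).coprod s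
  have hF (z : P × Q) : F z = f z.1 + s z.2 := rfl
  have hpF (z : P × Q) : p (F z) = g z.2 := by simp [hF, hs']
  let q : LinearMap.ker F →ₗ[A] LinearMap.ker g :=
    (LinearMap.snd A P Q).restrict fun z hz => by
      rw [LinearMap.mem_ker, LinearMap.snd_apply, ← hpF, hz, map_zero]
  refine ⟨F, fun m => ?_, q, ?_, ⟨?_⟩⟩
  · obtain ⟨y, hy⟩ := hg (p m)
    obtain ⟨x, hx⟩ := hf ⟨m - s y, by simp [hs', hy]⟩
    exact ⟨(x, y), by simp [hF, hx]⟩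
  · rintro ⟨y, hy⟩
    obtain ⟨x, hx⟩ := hf ⟨-s y, by simpa [hs'] using hy⟩
    exact ⟨⟨(x, y), by simp [hF, hx]⟩, rfl⟩
  · have left_mem (x : LinearMap.ker f) : ((x : P), (0 : Q)) ∈ LinearMap.ker F := by
      simp [hF, LinearMap.mem_ker.1 x.2]
    have snd_eq_zero (z : LinearMap.ker q) : (z : P × Q).2 = 0 := congrArg Subtype.val z.2
    have fst_mem (z : LinearMap.ker q) : (z : P × Q).1 ∈ LinearMap.ker f := by
      have hz := z.1.2
      rw [LinearMap.mem_ker, hF, snd_eq_zero z, map_zero, add_zero] at hz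
      exact Subtype.ext hz
    exact
      { toFun := fun x => ⟨⟨(x, 0), left_mem x⟩, rfl⟩
        map_add' := fun x y => Subtype.ext <| Subtype.ext <| by simp
        map_smul' := fun a x => Subtype.ext <| Subtype.ext <| by simp
        invFun := fun z => ⟨(z : P × Q).1, fst_mem z⟩
        left_inv := fun x => rfl
        right_inv := fun z => Subtype.ext <| Subtype.ext <| Prod.ext rfl (snd_eq_zero z).symm }

namespace HasFreeResolutionLT

theorem succ (h : HasFreeResolutionLT A n M) : HasFreeResolutionLT A (n + 1) M := by
  cases n with
  | zero =>
    have : Subsingleton M := h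
    exact one_of_subsingleton
  | succ n =>
    obtain ⟨k, f, hf, hker⟩ := h
    exact ⟨k, f, hf, hker.succ⟩

theorem mono {m : ℕ} (hnm : n ≤ m) (h : HasFreeResolutionLT A n M) :
    HasFreeResolutionLT A m M := by
  induction hnm with
  | refl => exact h
  | step _ ih => exact ih.succ

theorem of_ker_of_surjective_of_univ_eq {M N : Type u} [AddCommGroup M] [Module A M]
    [AddCommGroup N] [Module A N] {p : M →ₗ[A] N} (hp : Function.Surjective p)
    (hK : HasFreeResolutionLT A n (LinearMap.ker p)) (hN : HasFreeResolutionLT A n N) :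
    HasFreeResolutionLT A n M := by
  induction n generalizing M N with
  | zero =>
    rw [hasFreeResolutionLT_zero_iff] at *
    exact (LinearMap.ker_eq_bot.1 (Submodule.eq_bot_of_subsingleton (p := p.ker))).subsingleton
  | succ n ih =>
    obtain ⟨a, f, hf, hf'⟩ := hasFreeResolutionLT_succ_iff.1 hK
    obtain ⟨b, g, hg, hg'⟩ := hasFreeResolutionLT_succ_iff.1 hN
    obtain ⟨F, hF, q, hq, ⟨e⟩⟩ := exists_horseshoe hp hf hg
    exact of_cover (finProdEquivFinAdd A a b) F hF (ih hq (hf'.of_linearEquiv e) hg')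

theorem of_ker_of_surjective {p : M →ₗ[A] N} (hp : Function.Surjective p)
    (hK : HasFreeResolutionLT A n (LinearMap.ker p)) (hN : HasFreeResolutionLT A n N) :
    HasFreeResolutionLT A n M := by
  have : Module.Finite A (LinearMap.ker p) := hK.finite
  have : Module.Finite A N := hN.finite
  have : Module.Finite A (M ⧸ LinearMap.ker p) :=
    Module.Finite.equiv (p.quotKerEquivOfSurjective hp).symm
  have : Module.Finite A M := Module.Finite.of_submodule_quotient (LinearMap.ker p)
  have : Small.{u} M := Module.Finite.small A M
  have : Small.{u} N := Module.Finite.small A N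
  let eM : Shrink.{u} M ≃ₗ[A] M := Shrink.linearEquiv A M
  let eN : Shrink.{u} N ≃ₗ[A] N := Shrink.linearEquiv A N
  let p' : Shrink.{u} M →ₗ[A] Shrink.{u} N := eN.symm.toLinearMap ∘ₗ p ∘ₗ eM.toLinearMap
  have hp' : Function.Surjective p' := eN.symm.surjective.comp (hp.comp eM.surjective)
  have hK' : HasFreeResolutionLT A n (LinearMap.ker p') :=
    hK.of_linearEquiv (eM.symm.ofSubmodules _ _ (by ext x; simp [p']))
  exact (of_ker_of_surjective_of_univ_eq hp' hK' (hN.of_linearEquiv eN.symm)).of_linearEquiv eM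

theorem of_surjective_of_ker {p : M →ₗ[A] N} (hp : Function.Surjective p)
    (hK : HasFreeResolutionLT A n (LinearMap.ker p)) (hM : HasFreeResolutionLT A n M) :
    HasFreeResolutionLT A (n + 1) N := by
  cases n with
  | zero =>
    rw [hasFreeResolutionLT_zero_iff] at hM
    exact (hasFreeResolutionLT_zero_iff.2 hp.subsingleton).succ
  | succ n =>
    obtain ⟨k, f, hf, hker⟩ := hasFreeResolutionLT_succ_iff.1 hM
    refine hasFreeResolutionLT_succ_iff.2 ⟨k, p ∘ₗ f, hp.comp hf, ?_⟩
    let q : LinearMap.ker (p ∘ₗ f) →ₗ[A] LinearMap.ker p := f.restrict fun _ hx => hx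
    have hq : Function.Surjective q := by
      rintro ⟨m, hm⟩
      obtain ⟨x, rfl⟩ := hf m
      exact ⟨⟨x, hm⟩, rfl⟩
    have e : LinearMap.ker f ≃ₗ[A] LinearMap.ker q :=
      (Submodule.comapSubtypeEquivOfLe (LinearMap.ker_le_ker_comp f p)).symm.trans
        (LinearEquiv.ofEq _ _ (LinearMap.ker_restrict _).symm)
    exact of_ker_of_surjective hq (hker.of_linearEquiv e).succ hK

theorem isStablyFree {M : Type u} [AddCommGroup M] [Module A M] [Module.Projective A M]
    (h : HasFreeResolutionLT A n M) : IsStablyFree A M := by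
  induction n generalizing M with
  | zero =>
    rw [hasFreeResolutionLT_zero_iff] at h
    exact ⟨0, 0, ⟨LinearEquiv.ofSubsingleton _ _⟩⟩
  | succ n ih =>
    obtain ⟨k, f, hf, hker⟩ := hasFreeResolutionLT_succ_iff.1 h
    obtain ⟨s, hs⟩ := Module.projective_lifting_property f LinearMap.id hf
    obtain ⟨e, -, -⟩ := f.exact_subtype_ker_map.splitSurjectiveEquiv
      (LinearMap.ker f).injective_subtype ⟨s, hs⟩
    have : Module.Projective A (LinearMap.ker f) :=
      Module.Projective.of_split (e.symm.toLinearMap ∘ₗ LinearMap.inl A _ M)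
        (LinearMap.fst A _ M ∘ₗ e.toLinearMap) (by ext x; simp)
    obtain ⟨a, b, ⟨e'⟩⟩ := ih hker
    exact ⟨b, k + a, ⟨((LinearEquiv.refl A M).prodCongr e'.symm).trans <|
      (LinearEquiv.prodAssoc A M _ _).symm.trans <|
      (((LinearEquiv.prodComm A M _).trans e.symm).prodCongr (LinearEquiv.refl A _)).trans
        (finProdEquivFinAdd A k a)⟩⟩

theorem baseChange_of_univ_eq (S : Type w) [CommRing S] [Algebra A S] [Module.Flat A S]
    {M : Type u} [AddCommGroup M] [Module A M] (h : HasFreeResolutionLT A n M) :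
    HasFreeResolutionLT S n (S ⊗[A] M) := by
  induction n generalizing M with
  | zero =>
    rw [hasFreeResolutionLT_zero_iff] at h ⊢
    infer_instance
  | succ n ih =>
    obtain ⟨k, f, hf, hker⟩ := hasFreeResolutionLT_succ_iff.1 h
    exact of_cover (TensorProduct.piScalarRight A S S (Fin k))
      (AlgebraTensorModule.lTensor S S f) (LinearMap.lTensor_surjective S hf)
      ((ih hker).of_linearEquiv (LinearMap.tensorKerEquiv S S f))

theorem baseChange (S : Type w) [CommRing S] [Algebra A S] [Module.Flat A S]
    (h : HasFreeResolutionLT A n M) : HasFreeResolutionLT S n (S ⊗[A] M) := by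
  have : Module.Finite A M := h.finite
  have : Small.{u} M := Module.Finite.small A M
  let e : Shrink.{u} M ≃ₗ[A] M := Shrink.linearEquiv A M
  exact (baseChange_of_univ_eq S (h.of_linearEquiv e.symm)).of_linearEquiv (e.baseChange A S _ _)

end HasFreeResolutionLT

namespace HasFiniteFreeResolution

theorem of_ker_of_surjective {p : M →ₗ[A] N} (hp : Function.Surjective p)
    (hK : HasFiniteFreeResolution A (LinearMap.ker p)) (hN : HasFiniteFreeResolution A N) :
    HasFiniteFreeResolution A M := by
  obtain ⟨n, hK⟩ := hK
  obtain ⟨m, hN⟩ := hN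
  exact ⟨max n m, .of_ker_of_surjective hp (hK.mono (le_max_left n m)) (hN.mono (le_max_right n m))⟩

theorem of_surjective_of_ker {p : M →ₗ[A] N} (hp : Function.Surjective p)
    (hK : HasFiniteFreeResolution A (LinearMap.ker p)) (hM : HasFiniteFreeResolution A M) :
    HasFiniteFreeResolution A N := by
  obtain ⟨n, hK⟩ := hK
  obtain ⟨m, hM⟩ := hM
  exact ⟨_, .of_surjective_of_ker hp (hK.mono (le_max_left n m)) (hM.mono (le_max_right n m))⟩

theorem of_submodule_of_quotient (K : Submodule A M) (hK : HasFiniteFreeResolution A K)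
    (hQ : HasFiniteFreeResolution A (M ⧸ K)) : HasFiniteFreeResolution A M := by
  rw [← K.ker_mkQ] at hK
  exact of_ker_of_surjective K.mkQ_surjective hK hQ

end HasFiniteFreeResolution

/-- The ring `A` is freely resolvable if every finite `A`-module has a finite free resolution; for
Noetherian `A`, to which the notion is applied, it is the condition that submodules of the modules
`Aᵏ` have one, which involves no universe of modules. -/
def FreelyResolvable (A : Type*) [CommRing A] : Prop :=
  ∀ (k : ℕ) (K : Submodule A (Fin k → A)), HasFiniteFreeResolution A K

namespace FreelyResolvable

theorem hasFiniteFreeResolution (h : FreelyResolvable A) (M : Type*) [AddCommGroup M]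
    [Module A M] [Module.Finite A M] : HasFiniteFreeResolution A M := by
  obtain ⟨k, f, hf⟩ := Module.Finite.exists_fin' A M
  obtain ⟨n, hn⟩ := h k (LinearMap.ker f)
  exact ⟨n + 1, hasFreeResolutionLT_succ_iff.2 ⟨k, f, hf, hn⟩⟩

theorem of_isPrincipalIdealRing [IsDomain A] [IsPrincipalIdealRing A] : FreelyResolvable A := by
  intro k K
  obtain ⟨n, b⟩ := Submodule.basisOfPid (Pi.basisFun A (Fin k)) K
  exact ⟨1, .one_of_free b.equivFun⟩

theorem of_ringEquiv [IsNoetherianRing A] {S : Type*} [CommRing S] (e : A ≃+* S)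
    (h : FreelyResolvable A) : FreelyResolvable S := by
  intro k K
  have : IsNoetherianRing S := isNoetherianRing_of_ringEquiv A e
  let _ : Algebra A S := e.toRingHom.toAlgebra
  let _ : Module A K := Module.compHom K e.toRingHom
  have hsurj : Function.Surjective (algebraMap A S) := e.surjective
  let eS : A ≃ₗ[A] S := LinearEquiv.ofBijective (Algebra.linearMap A S) e.bijective
  have : Module.Flat A S := Module.Flat.of_linearEquiv eS.symm
  have : Module.Finite A S := Module.Finite.equiv eS
  have : Module.Finite A K := Module.Finite.trans S K
  have : TensorProduct.CompatibleSMul A S S K := ⟨fun s x y => by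
    obtain ⟨a, rfl⟩ := hsurj s
    rw [algebraMap_smul, algebraMap_smul, TensorProduct.smul_tmul]⟩
  obtain ⟨n, hn⟩ := h.hasFiniteFreeResolution K
  exact ⟨n, (hn.baseChange S).of_linearEquiv (TensorProduct.lidOfCompatibleSMul A S K)⟩

end FreelyResolvable

end FreeResolution

/-! ### Free resolutions and fibres -/

theorem exists_smul_eq_zero_of_finite {A M : Type*} [CommRing A] [AddCommGroup M] [Module A M]
    [Module.Finite A M] (S : Submonoid A) (h : ∀ m : M, ∃ d ∈ S, d • m = 0) :
    ∃ d ∈ S, ∀ m : M, d • m = 0 := by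
  classical
  obtain ⟨s, hs⟩ := (Module.Finite.fg_top : (⊤ : Submodule A M).FG)
  choose d hd hdm using h
  refine ⟨∏ x ∈ s, d x, S.prod_mem fun x _ => hd x, fun m => ?_⟩
  suffices (⊤ : Submodule A M) ≤ LinearMap.ker (LinearMap.lsmul A M (∏ x ∈ s, d x)) by
    simpa using this (Submodule.mem_top (x := m))
  rw [← hs, Submodule.span_le]
  intro x hx
  rw [SetLike.mem_coe, LinearMap.mem_ker, LinearMap.lsmul_apply, ← Finset.prod_erase_mul s d hx,
    mul_smul, hdm, smul_zero]

section Localization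

variable {A F : Type*} [CommRing A] [CommRing F] [Algebra A F] (S : Submonoid A)
  [IsLocalization S F] {M : Type*} [AddCommGroup M] [Module A M]

include S

theorem isLocalizedModule_tensorProduct_mk_one :
    IsLocalizedModule S (TensorProduct.mk A F M 1) :=
  (isLocalizedModule_iff_isBaseChange S F _).2 (TensorProduct.isBaseChange A M F)

theorem exists_smul_eq_zero_of_one_tmul_eq_zero {m : M} (h : (1 : F) ⊗ₜ[A] m = 0) :
    ∃ d ∈ S, d • m = 0 := by
  have := isLocalizedModule_tensorProduct_mk_one (F := F) S (M := M)
  obtain ⟨c, hc⟩ := (IsLocalizedModule.eq_zero_iff S (TensorProduct.mk A F M 1)).1 h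
  exact ⟨c, c.2, hc⟩

theorem exists_smul_eq_one_tmul (x : F ⊗[A] M) : ∃ d ∈ S, ∃ m : M, d • x = (1 : F) ⊗ₜ[A] m := by
  have := isLocalizedModule_tensorProduct_mk_one (F := F) S (M := M)
  obtain ⟨⟨m, d⟩, hc⟩ := IsLocalizedModule.surj S (TensorProduct.mk A F M 1) x
  exact ⟨d, d.2, m, hc⟩

theorem exists_lTensor_eq_comp_linearEquiv {ι : Type*} [Finite ι] (f : (ι → F) →ₗ[F] F ⊗[A] M) :
    ∃ (g : (ι → A) →ₗ[A] M) (e : (F ⊗[A] (ι → A)) ≃ₗ[F] (ι → F)),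
      AlgebraTensorModule.lTensor F F g = f ∘ₗ e.toLinearMap := by
  classical
  have := Fintype.ofFinite ι
  choose d hd m hm using fun i => exists_smul_eq_one_tmul S (f (Pi.single i 1))
  let b : Module.Basis ι F (F ⊗[A] (ι → A)) := (Pi.basisFun A ι).baseChange F
  let c : Module.Basis ι F (ι → F) :=
    (Pi.basisFun F ι).isUnitSMul fun i => IsLocalization.map_units F ⟨d i, hd i⟩
  refine ⟨(Pi.basisFun A ι).constr A m, b.equiv c (Equiv.refl ι), b.ext fun i => ?_⟩
  rw [LinearMap.comp_apply, LinearEquiv.coe_coe, b.equiv_apply, Module.Basis.baseChange_apply,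
    AlgebraTensorModule.lTensor_tmul, Module.Basis.constr_basis, ← hm, Equiv.refl_apply,
    Module.Basis.isUnitSMul_apply, algebraMap_smul, Pi.basisFun_apply, f.map_smul_of_tower]

theorem exists_smul_eq_zero_of_lTensor_surjective {N : Type*} [AddCommGroup N] [Module A N]
    [Module.Finite A M] {g : N →ₗ[A] M}
    (hg : Function.Surjective (AlgebraTensorModule.lTensor F F g)) :
    ∃ d ∈ S, ∀ x : M ⧸ LinearMap.range g, d • x = 0 := by
  refine exists_smul_eq_zero_of_finite S fun x => ?_
  obtain ⟨x, rfl⟩ := Submodule.mkQ_surjective _ x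
  refine exists_smul_eq_zero_of_one_tmul_eq_zero (F := F) S ?_
  obtain ⟨y, hy⟩ := hg (1 ⊗ₜ x)
  have hzero : AlgebraTensorModule.lTensor F F (LinearMap.range g).mkQ
      (AlgebraTensorModule.lTensor F F g y) = 0 := by
    rw [← LinearMap.comp_apply, ← AlgebraTensorModule.lTensor_comp,
      LinearMap.range_mkQ_comp, map_zero, LinearMap.zero_apply]
  rwa [hy, AlgebraTensorModule.lTensor_tmul] at hzero

end Localization

theorem HasFiniteFreeResolution.of_isLocalization {A A₀ : Type u} {F : Type v} [CommRing A]
    [CommRing A₀] [CommRing F] [Algebra A A₀] [IsNoetherianRing A₀] [Algebra A₀ F]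
    (S : Submonoid A₀) [IsLocalization S F]
    (hfree : ∀ k : ℕ, HasFiniteFreeResolution A (Fin k → A₀))
    (htorsion : ∀ (M : Type u) [AddCommGroup M] [Module A M] [Module A₀ M] [IsScalarTower A A₀ M]
      [Module.Finite A₀ M], (∃ d ∈ S, ∀ m : M, d • m = 0) → HasFiniteFreeResolution A M)
    (M : Type u) [AddCommGroup M] [Module A M] [Module A₀ M] [IsScalarTower A A₀ M]
    [Module.Finite A₀ M] (hM : HasFiniteFreeResolution F (F ⊗[A₀] M)) :
    HasFiniteFreeResolution A M := by
  have : Module.Flat A₀ F := IsLocalization.flat F S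
  obtain ⟨n, hM⟩ := hM
  induction n generalizing M with
  | zero =>
    rw [hasFreeResolutionLT_zero_iff] at hM
    exact htorsion M (exists_smul_eq_zero_of_finite S fun m =>
      exists_smul_eq_zero_of_one_tmul_eq_zero (F := F) S (Subsingleton.elim _ _))
  | succ n ih =>
    obtain ⟨k, f, hf, hker⟩ := hasFreeResolutionLT_succ_iff.1 hM
    obtain ⟨g, e, hge⟩ := exists_lTensor_eq_comp_linearEquiv S f
    have hker_tensor : HasFreeResolutionLT F n (F ⊗[A₀] LinearMap.ker g) :=
      hker.of_linearEquiv <| (e.symm.ofSubmodules (LinearMap.ker f)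
        (LinearMap.ker (AlgebraTensorModule.lTensor F F g))
        (by rw [hge, LinearMap.ker_comp]; exact Submodule.map_equiv_eq_comap_symm e.symm _)).trans
          (LinearMap.tensorKerEquiv F F g).symm
    have hrange : HasFiniteFreeResolution A (LinearMap.range g) :=
      .of_surjective_of_ker (p := g.rangeRestrict.restrictScalars A) g.surjective_rangeRestrict
        (by
          rw [LinearMap.ker_restrictScalars, LinearMap.ker_rangeRestrict]
          exact ih (LinearMap.ker g) hker_tensor)
        (hfree k)
    have hquot : HasFiniteFreeResolution A (M ⧸ LinearMap.range g) :=
      htorsion _ <| exists_smul_eq_zero_of_lTensor_surjective (F := F) S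
        (hge ▸ hf.comp e.surjective)
    exact .of_submodule_of_quotient ((LinearMap.range g).restrictScalars A) hrange hquot

section Fibre

variable {R : Type*} [CommRing R] (P : Ideal R) [P.IsPrime]

theorem exists_notMem_smul_mem_of_one_tmul_eq_zero {M : Type*} [AddCommGroup M] [Module R M]
    {m : M} (h : (1 : P.ResidueField) ⊗ₜ[R] m = 0) :
    ∃ d ∉ P, d • m ∈ P • (⊤ : Submodule R M) := by
  have hquot : (1 : P.ResidueField) ⊗ₜ[R ⧸ P] ((1 : R ⧸ P) ⊗ₜ[R] m) = 0 := by
    apply (AlgebraTensorModule.cancelBaseChange R (R ⧸ P) P.ResidueField P.ResidueField M).injective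
    rw [AlgebraTensorModule.cancelBaseChange_tmul, one_smul, h, map_zero]
  obtain ⟨d, hd, hdm⟩ :=
    exists_smul_eq_zero_of_one_tmul_eq_zero (nonZeroDivisors (R ⧸ P)) hquot
  obtain ⟨d, rfl⟩ := Ideal.Quotient.mk_surjective d
  refine ⟨d, fun hdP => nonZeroDivisors.ne_zero hd (Ideal.Quotient.eq_zero_iff_mem.2 hdP), ?_⟩
  have hmk : (Ideal.Quotient.mk P d : R ⧸ P) ⊗ₜ[R] m = 0 := by
    rwa [TensorProduct.smul_tmul', smul_eq_mul, mul_one] at hdm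
  rw [← Submodule.Quotient.mk_eq_zero, ← quotTensorEquivQuotSMul_mk_tmul, hmk, map_zero]

theorem one_tmul_eq_zero_of_mem_smul_top {M : Type*} [AddCommGroup M] [Module R M] {m : M}
    (h : m ∈ P • (⊤ : Submodule R M)) : (1 : P.ResidueField) ⊗ₜ[R] m = 0 := by
  refine Submodule.smul_induction_on h (fun r hr n _ => ?_) fun x y hx hy => ?_
  · rw [← TensorProduct.smul_tmul, Algebra.smul_def, mul_one,
      Ideal.algebraMap_residueField_eq_zero.2 hr, TensorProduct.zero_tmul]
  · rw [TensorProduct.tmul_add, hx, hy, add_zero]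

theorem mem_smul_top_iff_mem_map {A : Type*} [CommRing A] [Algebra R A] (I : Ideal R) (a : A) :
    a ∈ I • (⊤ : Submodule R A) ↔ a ∈ I.map (algebraMap R A) := by
  rw [Ideal.smul_top_eq_map, Submodule.restrictScalars_mem]

variable (A : Type*) [CommRing A] [Algebra R A]

/-- The canonical map `A/PA → κ(P) ⊗ A` from the closed fibre to the fibre over `P`. -/
noncomputable abbrev quotientMapToFibre : (A ⧸ P.map (algebraMap R A)) →+* P.ResidueField ⊗[R] A :=
  Ideal.Quotient.lift _
    (Algebra.TensorProduct.includeRight : A →ₐ[R] P.ResidueField ⊗[R] A).toRingHom fun a ha =>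
      one_tmul_eq_zero_of_mem_smul_top P ((mem_smul_top_iff_mem_map P a).2 ha)

theorem isLocalization_fibre : letI := (quotientMapToFibre P A).toAlgebra
    IsLocalization (P.primeCompl.map (algebraMap R (A ⧸ P.map (algebraMap R A))))
      (P.ResidueField ⊗[R] A) := by
  let _ := (quotientMapToFibre P A).toAlgebra
  have hmap : ∀ r : R, algebraMap (A ⧸ P.map (algebraMap R A)) (P.ResidueField ⊗[R] A)
      (algebraMap R _ r) = algebraMap R _ r :=
    (Algebra.TensorProduct.includeRight : A →ₐ[R] P.ResidueField ⊗[R] A).commutes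
  refine ⟨⟨?_, fun z => ?_, fun {x y} hxy => ?_⟩⟩
  · rintro ⟨_, r, hrP, rfl⟩
    change IsUnit (algebraMap (A ⧸ P.map (algebraMap R A)) _ (algebraMap R _ r))
    rw [hmap, IsScalarTower.algebraMap_apply R P.ResidueField]
    exact (isUnit_iff_ne_zero.2 (Ideal.algebraMap_residueField_eq_zero.not.2 hrP)).map _
  · obtain ⟨r, hrP, s, hs⟩ := Ideal.Fiber.exists_smul_eq_one_tmul P z
    refine ⟨(Ideal.Quotient.mk _ s, ⟨_, r, hrP, rfl⟩), ?_⟩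
    change z * algebraMap (A ⧸ P.map (algebraMap R A)) _ (algebraMap R _ r) = 1 ⊗ₜ s
    rw [hmap, ← hs, mul_comm, Algebra.smul_def]
  · obtain ⟨x, rfl⟩ := Ideal.Quotient.mk_surjective x
    obtain ⟨y, rfl⟩ := Ideal.Quotient.mk_surjective y
    change (1 : P.ResidueField) ⊗ₜ[R] x = 1 ⊗ₜ y at hxy
    rw [← sub_eq_zero, ← TensorProduct.tmul_sub] at hxy
    obtain ⟨d, hd, h⟩ := exists_notMem_smul_mem_of_one_tmul_eq_zero P hxy
    refine ⟨⟨_, d, hd, rfl⟩, ?_⟩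
    change algebraMap R _ d * _ = algebraMap R _ d * _
    rw [← Algebra.smul_def, ← Algebra.smul_def, ← sub_eq_zero, ← smul_sub, ← map_sub]
    exact Ideal.Quotient.eq_zero_iff_mem.2 ((mem_smul_top_iff_mem_map P _).1 h)

end Fibre

section Devissage

variable {R : Type v} {A : Type u} [CommRing R] [CommRing A] [Algebra R A]

theorem HasFiniteFreeResolution.of_sup_annihilator {J : Ideal R} {x : R} (hx : x ∉ J)
    (hJ : ∀ I > J, ∀ (M : Type u) [AddCommGroup M] [Module A M] [Module.Finite A M],
      I.map (algebraMap R A) ≤ Module.annihilator A M → HasFiniteFreeResolution A M)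
    (M : Type u) [AddCommGroup M] [Module A M] [Module.Finite A M]
    (hM : J.map (algebraMap R A) ≤ Module.annihilator A M)
    (hxM : ∀ m : M, algebraMap R A x • m = 0) : HasFiniteFreeResolution A M := by
  refine hJ (J ⊔ Ideal.span {x}) ?_ M ?_
  · rwa [gt_iff_lt, left_lt_sup, Ideal.span_singleton_le_iff_mem]
  · rw [Ideal.map_sup, Ideal.map_span, Set.image_singleton, sup_le_iff,
      Ideal.span_singleton_le_iff_mem, Module.mem_annihilator]
    exact ⟨hM, hxM⟩

theorem HasFiniteFreeResolution.of_prime_le_annihilator [IsNoetherianRing R] [IsNoetherianRing A]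
    [Module.Flat R A] (hR : FreelyResolvable R) (P : Ideal R) [P.IsPrime]
    (hfibre : FreelyResolvable (P.ResidueField ⊗[R] A))
    (hP : ∀ I > P, ∀ (M : Type u) [AddCommGroup M] [Module A M] [Module.Finite A M],
      I.map (algebraMap R A) ≤ Module.annihilator A M → HasFiniteFreeResolution A M)
    (M : Type u) [AddCommGroup M] [Module A M] [Module.Finite A M]
    (hM : P.map (algebraMap R A) ≤ Module.annihilator A M) : HasFiniteFreeResolution A M := by
  let A₀ := A ⧸ P.map (algebraMap R A)
  let F := P.ResidueField ⊗[R] A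
  let _ : Algebra A₀ F := (quotientMapToFibre P A).toAlgebra
  let S : Submonoid A₀ := P.primeCompl.map (algebraMap R A₀)
  have : IsLocalization S F := isLocalization_fibre P A
  have htors : Module.IsTorsionBySet A M (P.map (algebraMap R A) : Set A) :=
    (Module.isTorsionBySet_iff_subset_annihilator A M).2 hM
  let _ : Module A₀ M := htors.module
  have : IsScalarTower A A₀ M := htors.isScalarTower
  have : Module.Finite A₀ M := Module.Finite.of_restrictScalars_finite A A₀ M
  refine .of_isLocalization (F := F) S (fun k => ?_) (fun N _ _ _ _ _ hd => ?_) M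
    (hfibre.hasFiniteFreeResolution (F ⊗[A₀] M))
  · obtain ⟨n, hn⟩ := hR.hasFiniteFreeResolution (Fin k → R ⧸ P)
    exact ⟨n, (hn.baseChange A).of_linearEquiv <|
      (TensorProduct.piRight R A A fun _ : Fin k => R ⧸ P).trans <|
        LinearEquiv.piCongrRight fun _ =>
          (Algebra.TensorProduct.quotIdealMapEquivTensorQuot A P).symm.toLinearEquiv⟩
  · obtain ⟨_, ⟨d, hdP, rfl⟩, hd⟩ := hd
    have hmk : ∀ (a : A) (y : N), a • y = (Ideal.Quotient.mk _ a : A₀) • y :=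
      fun a y => (algebraMap_smul A₀ a y).symm
    have : Module.Finite A N := Module.Finite.trans A₀ N
    refine .of_sup_annihilator hdP hP N (fun a ha => ?_) fun y => (hmk _ y).trans (hd y)
    exact Module.mem_annihilator.2 fun y => by
      rw [hmk, Ideal.Quotient.eq_zero_iff_mem.2 ha, zero_smul]

theorem HasFiniteFreeResolution.of_not_prime_le_annihilator [IsNoetherianRing A] {J : Ideal R}
    {a b : R} (ha : a ∉ J) (hb : b ∉ J) (hab : a * b ∈ J)
    (hJ : ∀ I > J, ∀ (M : Type u) [AddCommGroup M] [Module A M] [Module.Finite A M],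
      I.map (algebraMap R A) ≤ Module.annihilator A M → HasFiniteFreeResolution A M)
    (M : Type u) [AddCommGroup M] [Module A M] [Module.Finite A M]
    (hM : J.map (algebraMap R A) ≤ Module.annihilator A M) : HasFiniteFreeResolution A M := by
  let N := LinearMap.range (LinearMap.lsmul A M (algebraMap R A a))
  refine .of_submodule_of_quotient N ?_ ?_
  · refine .of_sup_annihilator hb hJ N
      (hM.trans (LinearMap.annihilator_le_of_injective N.subtype N.injective_subtype)) ?_
    rintro ⟨_, m, rfl⟩
    have hmul : algebraMap R A b • algebraMap R A a • m = 0 := by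
      rw [← mul_smul, ← map_mul, mul_comm]
      exact Module.mem_annihilator.1 (hM (Ideal.mem_map_of_mem _ hab)) m
    exact Subtype.ext hmul
  · refine .of_sup_annihilator ha hJ (M ⧸ N)
      (hM.trans (LinearMap.annihilator_le_of_surjective N.mkQ N.mkQ_surjective)) fun m => ?_
    obtain ⟨m, rfl⟩ := N.mkQ_surjective m
    rw [← map_smul, N.mkQ_apply, Submodule.Quotient.mk_eq_zero]
    exact ⟨m, rfl⟩

variable [IsNoetherianRing R] [IsNoetherianRing A] [Module.Flat R A]

theorem HasFiniteFreeResolution.of_map_le_annihilator (hR : FreelyResolvable R)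
    (hfibre : ∀ (P : Ideal R) [P.IsPrime], FreelyResolvable (P.ResidueField ⊗[R] A)) (J : Ideal R)
    (M : Type u) [AddCommGroup M] [Module A M] [Module.Finite A M]
    (hM : J.map (algebraMap R A) ≤ Module.annihilator A M) : HasFiniteFreeResolution A M := by
  induction J using WellFoundedGT.induction generalizing M with
  | ind J ih =>
  by_cases hJ : J = ⊤
  · rw [hJ, Ideal.map_top, top_le_iff, Module.annihilator_eq_top_iff] at hM
    exact ⟨0, hasFreeResolutionLT_zero_iff.2 hM⟩
  by_cases hP : J.IsPrime
  · exact .of_prime_le_annihilator hR J (hfibre J) ih M hM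
  · obtain ⟨a, ha, b, hb, hab⟩ := (Ideal.not_isPrime_iff.1 hP).resolve_left hJ
    exact .of_not_prime_le_annihilator ha hb hab ih M hM

theorem FreelyResolvable.of_fibres (hR : FreelyResolvable R)
    (hfibre : ∀ (P : Ideal R) [P.IsPrime], FreelyResolvable (P.ResidueField ⊗[R] A)) :
    FreelyResolvable A := fun _ K =>
  .of_map_le_annihilator hR hfibre ⊥ K (by simp only [Ideal.map_bot, bot_le])

end Devissage

namespace FreelyResolvable

variable {R : Type*} [CommRing R] [IsNoetherianRing R]

theorem polynomial (hR : FreelyResolvable R) : FreelyResolvable (Polynomial R) :=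
  .of_fibres hR fun P _ =>
    .of_ringEquiv (polyEquivTensor R P.ResidueField).toRingEquiv .of_isPrincipalIdealRing

theorem mvPolynomial (hR : FreelyResolvable R) (n : ℕ) :
    FreelyResolvable (MvPolynomial (Fin n) R) := by
  induction n with
  | zero => exact .of_ringEquiv (MvPolynomial.isEmptyRingEquiv R (Fin 0)).symm hR
  | succ n ih => exact .of_ringEquiv (MvPolynomial.finSuccEquiv R n).symm.toRingEquiv ih.polynomial

end FreelyResolvable

/-! ### Maps that are bijective modulo an ideal and up to denominators -/

open MvPolynomial

section Almost

variable {R P Q : Type*} [CommRing R] [CommRing P] [CommRing Q] [Algebra R P] [Algebra R Q]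

/-- `φ` becomes surjective modulo `I` after inverting the elements of `M`. -/
def AlmostSurjective (M : Submonoid R) (I : Ideal R) (φ : P →ₐ[R] Q) : Prop :=
  ∀ y, ∃ d ∈ M, ∃ x, d • y - φ x ∈ I.map (algebraMap R Q)

/-- `φ` becomes injective modulo `I` after inverting the elements of `M`. As `φ` is linear, it is
enough to test elements whose image lies in `I Q` without a denominator. -/
def AlmostInjective (M : Submonoid R) (I : Ideal R) (φ : P →ₐ[R] Q) : Prop :=
  ∀ x, φ x ∈ I.map (algebraMap R Q) → ∃ d ∈ M, d • x ∈ I.map (algebraMap R P)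

variable {M : Submonoid R} {I : Ideal R} {φ : P →ₐ[R] Q}

theorem almostSurjective_bot_iff :
    AlmostSurjective ⊥ I φ ↔ ∀ y, ∃ x, y - φ x ∈ I.map (algebraMap R Q) := by
  simp only [AlmostSurjective, Submonoid.mem_bot, exists_eq_left, one_smul]

theorem almostInjective_bot_iff :
    AlmostInjective ⊥ I φ ↔ ∀ x, φ x ∈ I.map (algebraMap R Q) → x ∈ I.map (algebraMap R P) := by
  simp only [AlmostInjective, Submonoid.mem_bot, exists_eq_left, one_smul]

theorem mem_map_span_singleton_iff {π : R} {x : P} :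
    x ∈ (Ideal.span {π}).map (algebraMap R P) ↔ ∃ q : P, x = π • q := by
  rw [Ideal.map_span, Set.image_singleton, Ideal.mem_span_singleton']
  exact exists_congr fun q => by rw [Algebra.smul_def, mul_comm, eq_comm]

theorem almostSurjective_powers_bot_iff {π : R} :
    AlmostSurjective (Submonoid.powers π) ⊥ φ ↔ ∀ y, ∃ (N : ℕ) (x : P), π ^ N • y = φ x := by
  simp only [AlmostSurjective, Submonoid.mem_powers_iff, Ideal.map_bot, Ideal.mem_bot, sub_eq_zero,
    exists_exists_eq_and]

theorem almostInjective_powers_bot_iff {π : R} (hπ : IsSMulRegular P π) :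
    AlmostInjective (Submonoid.powers π) ⊥ φ ↔ Function.Injective φ := by
  simp only [AlmostInjective, injective_iff_map_eq_zero, Submonoid.mem_powers_iff, Ideal.map_bot,
    Ideal.mem_bot, exists_exists_eq_and]
  refine forall₂_congr fun x _ => ⟨fun ⟨N, hN⟩ => (hπ.pow N).right_eq_zero_of_smul hN, ?_⟩
  rintro rfl
  exact ⟨0, smul_zero _⟩

theorem map_mem_map (φ : P →ₐ[R] Q) {x : P} (hx : x ∈ I.map (algebraMap R P)) :
    φ x ∈ I.map (algebraMap R Q) := by
  have h := Ideal.mem_map_of_mem φ.toRingHom hx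
  rwa [Ideal.map_map, AlgHom.toRingHom_eq_coe, φ.comp_algebraMap] at h

theorem mem_map_iff_of_ker_le (hφ : Function.Surjective φ)
    (hker : RingHom.ker φ ≤ I.map (algebraMap R P)) {x : P} :
    φ x ∈ I.map (algebraMap R Q) ↔ x ∈ I.map (algebraMap R P) := by
  refine ⟨fun h => ?_, map_mem_map φ⟩
  rw [← φ.comp_algebraMap, ← Ideal.map_map] at h
  obtain ⟨y, hy, hyx⟩ := (Ideal.mem_map_iff_of_surjective (φ : P →+* Q) hφ).1 h
  have hxy : x - y ∈ I.map (algebraMap R P) :=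
    hker (by rw [RingHom.mem_ker, map_sub]; exact sub_eq_zero.2 hyx.symm)
  simpa using add_mem hxy hy

theorem smul_mem_map_of_mem {r : R} (hr : r ∈ I) (x : P) : r • x ∈ I.map (algebraMap R P) := by
  rw [Algebra.smul_def]
  exact Ideal.mul_mem_right _ _ (Ideal.mem_map_of_mem _ hr)

variable (M I φ) in
/-- The elements of `Q` that lie in the range of `φ` modulo `I`, up to denominators in `M`. -/
def nearRange : Subalgebra R Q where
  carrier := {y | ∃ d ∈ M, ∃ x, d • y - φ x ∈ I.map (algebraMap R Q)}
  mul_mem' := by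
    rintro y z ⟨d, hd, p, hp⟩ ⟨c, hc, q, hq⟩
    refine ⟨d * c, M.mul_mem hd hc, p * q, ?_⟩
    have h : (d * c) • (y * z) - φ (p * q) = (d • y - φ p) * (c • z) + φ p * (c • z - φ q) := by
      simp only [map_mul, Algebra.smul_def]
      ring
    rw [h]
    exact add_mem (Ideal.mul_mem_right _ _ hp) (Ideal.mul_mem_left _ _ hq)
  add_mem' := by
    rintro y z ⟨d, hd, p, hp⟩ ⟨c, hc, q, hq⟩
    refine ⟨d * c, M.mul_mem hd hc, c • p + d • q, ?_⟩
    have h : (d * c) • (y + z) - φ (c • p + d • q) = c • (d • y - φ p) + d • (c • z - φ q) := by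
      simp only [map_add, map_smul, smul_sub, smul_add, mul_smul, smul_comm c d]
      abel
    rw [h]
    exact add_mem (Submodule.smul_of_tower_mem _ _ hp) (Submodule.smul_of_tower_mem _ _ hq)
  algebraMap_mem' := fun b => ⟨1, M.one_mem, algebraMap R P b, by simp⟩

theorem range_le_nearRange : φ.range ≤ nearRange M I φ := by
  rintro _ ⟨x, rfl⟩
  exact ⟨1, M.one_mem, x, by simp⟩

theorem mem_nearRange_of_mem_map {y : Q} (hy : y ∈ I.map (algebraMap R Q)) :
    y ∈ nearRange M I φ :=
  ⟨1, M.one_mem, 0, by simpa using hy⟩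

theorem exists_mem_forall_finset {ι : Type*} (M : Submonoid R) (s : Finset ι) {p : ι → R → Prop}
    (hp : ∀ i d c, p i d → p i (c * d)) (h : ∀ i ∈ s, ∃ d ∈ M, p i d) :
    ∃ d ∈ M, ∀ i ∈ s, p i d := by
  classical
  induction s using Finset.induction_on with
  | empty => exact ⟨1, M.one_mem, by simp⟩
  | insert a s _ ih =>
    obtain ⟨d, hd, hs⟩ := ih fun i hi => h i (Finset.mem_insert_of_mem hi)
    obtain ⟨c, hc, hac⟩ := h a (Finset.mem_insert_self _ _)
    refine ⟨c * d, M.mul_mem hc hd, Finset.forall_mem_insert _ _ _ |>.2 ⟨?_, fun i hi => ?_⟩⟩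
    · rw [mul_comm]
      exact hp _ _ _ hac
    · exact hp _ _ _ (hs i hi)

section Transfer

variable {P' Q' : Type*} [CommRing P'] [CommRing Q'] [Algebra R P'] [Algebra R Q']
  {φ' : P' →ₐ[R] Q'} {p : P →ₐ[R] P'} {q : Q →ₐ[R] Q'}

theorem almostSurjective_iff_of_ker_le (hp : Function.Surjective p) (hq : Function.Surjective q)
    (hkerq : RingHom.ker q ≤ I.map (algebraMap R Q)) (h : φ'.comp p = q.comp φ) :
    AlmostSurjective M I φ' ↔ AlmostSurjective M I φ := by
  refine hq.forall.trans (forall_congr' fun y => exists_congr fun d => and_congr_right fun _ => ?_)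
  refine hp.exists.trans (exists_congr fun x => ?_)
  rw [show φ' (p x) = q (φ x) from AlgHom.congr_fun h x, ← map_smul, ← map_sub,
    mem_map_iff_of_ker_le hq hkerq]

theorem almostInjective_iff_of_ker_le (hp : Function.Surjective p) (hq : Function.Surjective q)
    (hkerp : RingHom.ker p ≤ I.map (algebraMap R P))
    (hkerq : RingHom.ker q ≤ I.map (algebraMap R Q)) (h : φ'.comp p = q.comp φ) :
    AlmostInjective M I φ' ↔ AlmostInjective M I φ := by
  refine hp.forall.trans (forall_congr' fun x => ?_)
  rw [show φ' (p x) = q (φ x) from AlgHom.congr_fun h x, mem_map_iff_of_ker_le hq hkerq]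
  simp only [← map_smul, mem_map_iff_of_ker_le hp hkerp]

end Transfer

theorem AlmostSurjective.comp {S : Type*} [CommRing S] [Algebra R S] {ψ : Q →ₐ[R] S}
    (hψ : AlmostSurjective M I ψ) (hφ : AlmostSurjective M I φ) :
    AlmostSurjective M I (ψ.comp φ) := by
  intro z
  obtain ⟨d, hd, y, hy⟩ := hψ z
  obtain ⟨c, hc, x, hx⟩ := hφ y
  refine ⟨c * d, M.mul_mem hc hd, x, ?_⟩
  have h : (c * d) • z - ψ.comp φ x = c • (d • z - ψ y) + ψ (c • y - φ x) := by
    rw [mul_smul, smul_sub, map_sub, map_smul, AlgHom.comp_apply, sub_add_sub_cancel]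
  rw [h]
  exact add_mem (Submodule.smul_of_tower_mem _ _ hy) (map_mem_map ψ hx)

theorem AlmostInjective.of_comp_right {S : Type*} [CommRing S] [Algebra R S] {ψ : Q →ₐ[R] S}
    (h : AlmostInjective M I (ψ.comp φ)) (hφ : AlmostSurjective M I φ) :
    AlmostInjective M I ψ := by
  intro y hy
  obtain ⟨d, hd, x, hx⟩ := hφ y
  have hψφ : ψ (φ x) ∈ I.map (algebraMap R S) := by
    have := sub_mem (Submodule.smul_of_tower_mem _ d hy) (map_mem_map ψ hx)
    rwa [map_sub, map_smul, sub_sub_cancel] at this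
  obtain ⟨c, hc, hcx⟩ := h x hψφ
  refine ⟨c * d, M.mul_mem hc hd, ?_⟩
  have := add_mem (Submodule.smul_of_tower_mem _ c hx) (map_mem_map φ hcx)
  rwa [map_smul, smul_sub, sub_add_cancel, ← mul_smul] at this

theorem AlmostSurjective.pow_endomorphism {φ : P →ₐ[R] P} (h : AlmostSurjective M I φ) (n : ℕ) :
    AlmostSurjective M I (φ ^ n) := by
  induction n with
  | zero => exact fun y => ⟨1, M.one_mem, y, by simp⟩
  | succ n ih =>
    rw [pow_succ]
    exact ih.comp h

theorem AlmostSurjective.almostInjective_endomorphism [IsNoetherianRing P] {φ : P →ₐ[R] P}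
    (h : AlmostSurjective M I φ) : AlmostInjective M I φ := by
  let K : ℕ →o Ideal P :=
    { toFun n :=
        { carrier := {x | ∃ d ∈ M, d • (φ ^ n) x ∈ I.map (algebraMap R P)}
          zero_mem' := ⟨1, M.one_mem, by simp⟩
          add_mem' := by
            rintro x y ⟨d, hd, hx⟩ ⟨c, hc, hy⟩
            refine ⟨d * c, M.mul_mem hd hc, ?_⟩
            rw [map_add, smul_add, mul_smul d c ((φ ^ n) y), mul_comm d c, mul_smul]
            exact add_mem (Submodule.smul_of_tower_mem _ c hx) (Submodule.smul_of_tower_mem _ d hy)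
          smul_mem' := by
            rintro a x ⟨d, hd, hx⟩
            refine ⟨d, hd, ?_⟩
            rw [smul_eq_mul, map_mul, ← mul_smul_comm]
            exact Ideal.mul_mem_left _ _ hx }
      monotone' := monotone_nat_of_le_succ fun n x ⟨d, hd, hx⟩ => ⟨d, hd, by
        rw [pow_succ', AlgHom.mul_apply, ← map_smul]
        exact map_mem_map φ hx⟩ }
  obtain ⟨n, hn⟩ := monotone_stabilizes_iff_noetherian.2 ‹IsNoetherianRing P› K
  intro x hx
  obtain ⟨d, hd, y, hy⟩ := h.pow_endomorphism n x
  have hy_succ : y ∈ K (n + 1) := by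
    refine ⟨1, M.one_mem, ?_⟩
    have := sub_mem (Submodule.smul_of_tower_mem _ d hx) (map_mem_map φ hy)
    rwa [map_sub, map_smul, sub_sub_cancel, ← AlgHom.mul_apply, ← pow_succ',
      ← one_smul R ((φ ^ (n + 1)) y)] at this
  obtain ⟨c, hc, hcy⟩ : y ∈ K n := hn (n + 1) n.le_succ ▸ hy_succ
  refine ⟨c * d, M.mul_mem hc hd, ?_⟩
  have := add_mem (Submodule.smul_of_tower_mem _ c hy) hcy
  rwa [smul_sub, sub_add_cancel, ← mul_smul] at this

theorem AlmostSurjective.almostInjective [IsNoetherianRing Q] (hφ : AlmostSurjective M I φ)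
    {ψ : Q →ₐ[R] P} (hψ : AlmostSurjective M I ψ) : AlmostInjective M I φ :=
  (hφ.comp hψ).almostInjective_endomorphism.of_comp_right hψ

theorem AlmostSurjective.surjective_of_almostInjective {π : R} (hπ : IsSMulRegular Q π)
    (hsurj : AlmostSurjective (Submonoid.powers π) ⊥ φ)
    (hinj : AlmostInjective ⊥ (Ideal.span {π}) φ) : Function.Surjective φ := by
  have descend : ∀ (N : ℕ) (y : Q) (x : P), π ^ N • y = φ x → ∃ x, φ x = y := by
    intro N
    induction N with
    | zero => exact fun y x h => ⟨x, by rw [← h, pow_zero, one_smul]⟩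
    | succ N ih =>
      intro y x h
      rw [pow_succ', mul_smul] at h
      obtain ⟨z, rfl⟩ := mem_map_span_singleton_iff.1
        (almostInjective_bot_iff.1 hinj x (mem_map_span_singleton_iff.2 ⟨_, h.symm⟩))
      rw [map_smul] at h
      exact ih y z (hπ h)
  intro y
  obtain ⟨N, x, hx⟩ := almostSurjective_powers_bot_iff.1 hsurj y
  exact descend N y x hx

theorem AlmostSurjective.of_surjective (h : Function.Surjective φ) : AlmostSurjective M I φ := by
  intro y
  obtain ⟨x, rfl⟩ := h y
  exact ⟨1, M.one_mem, x, by simp⟩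

theorem bijective_of_almostSurjective [IsNoetherianRing Q] {π : R} (hP : IsSMulRegular P π)
    (hQ : IsSMulRegular Q π) {ψ ψ' : Q →ₐ[R] P}
    (hφ : AlmostSurjective (Submonoid.powers π) ⊥ φ)
    (hψ : AlmostSurjective (Submonoid.powers π) ⊥ ψ)
    (hφ' : AlmostSurjective ⊥ (Ideal.span {π}) φ)
    (hψ' : AlmostSurjective ⊥ (Ideal.span {π}) ψ') : Function.Bijective φ :=
  ⟨(almostInjective_powers_bot_iff hP).1 (hφ.almostInjective hψ),
    hφ.surjective_of_almostInjective hQ (hφ'.almostInjective hψ')⟩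

theorem le_sup_pow_smul {V : Type*} [AddCommGroup V] [Module R V] {J : Ideal R}
    {N K : Submodule R V} (h : K ≤ N ⊔ J • K) (n : ℕ) : K ≤ N ⊔ J ^ n • K := by
  induction n with
  | zero => rw [pow_zero, one_smul]; exact le_sup_right
  | succ n ih =>
    calc K ≤ N ⊔ J ^ n • (N ⊔ J • K) := ih.trans (sup_le_sup_left (Submodule.smul_mono le_rfl h) _)
      _ = N ⊔ (J ^ n • N ⊔ J ^ (n + 1) • K) := by rw [Submodule.smul_sup, ← mul_smul, ← pow_succ]
      _ ≤ N ⊔ J ^ (n + 1) • K :=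
        sup_le le_sup_left (sup_le_sup_right Submodule.smul_le_right _)

theorem AlmostSurjective.of_pow_le {J : Ideal R} (h : AlmostSurjective ⊥ J φ) {k : ℕ}
    (hk : J ^ k ≤ I) : AlmostSurjective ⊥ I φ := by
  rw [almostSurjective_bot_iff] at h ⊢
  have htop : (⊤ : Submodule R Q) ≤ LinearMap.range φ.toLinearMap ⊔ J • ⊤ := fun y _ => by
    obtain ⟨x, hx⟩ := h y
    exact Submodule.mem_sup.2 ⟨φ x, ⟨x, rfl⟩, _, (mem_smul_top_iff_mem_map _ _).2 hx,
      add_sub_cancel _ _⟩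
  intro y
  obtain ⟨_, ⟨x, rfl⟩, z, hz, rfl⟩ :=
    Submodule.mem_sup.1 (le_sup_pow_smul htop k (Submodule.mem_top (x := y)))
  refine ⟨x, (mem_smul_top_iff_mem_map _ _).1 (Submodule.smul_mono_left hk ?_)⟩
  rwa [AlgHom.toLinearMap_apply, add_sub_cancel_left]

theorem AlmostInjective.span_pow {π : R} (hπ : IsSMulRegular Q π)
    (h : AlmostInjective ⊥ (Ideal.span {π}) φ) (k : ℕ) :
    AlmostInjective ⊥ (Ideal.span {π ^ k}) φ := by
  simp only [almostInjective_bot_iff, mem_map_span_singleton_iff] at h ⊢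
  induction k with
  | zero => exact fun x _ => ⟨x, by rw [pow_zero, one_smul]⟩
  | succ k ih =>
    rintro x ⟨y, hy⟩
    rw [pow_succ', mul_smul] at hy
    obtain ⟨z, rfl⟩ := h x ⟨_, hy⟩
    obtain ⟨w, rfl⟩ := ih z ⟨y, hπ (by simpa only [map_smul] using hy)⟩
    exact ⟨w, by rw [pow_succ', mul_smul]⟩

end Almost

section Flat

variable {R : Type*} [CommRing R] {I J : Ideal R}

theorem exists_eq_sum_smul_of_mem_smul_top {V : Type*} [AddCommGroup V] [Module R V] {x : V}
    (h : x ∈ I • (⊤ : Submodule R V)) :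
    ∃ (n : ℕ) (f : Fin n → R) (v : Fin n → V), (∀ i, f i ∈ I) ∧ x = ∑ i, f i • v i := by
  induction h using Submodule.smul_induction_on' with
  | smul r hr v _ => exact ⟨1, fun _ => r, fun _ => v, fun _ => hr, by simp⟩
  | add x _ y _ hx hy =>
    obtain ⟨n, f, v, hf, rfl⟩ := hx
    obtain ⟨m, g, w, hg, rfl⟩ := hy
    refine ⟨n + m, Fin.append f g, Fin.append v w, ?_, ?_⟩
    · refine Fin.addCases (fun i => ?_) fun i => ?_
      · rw [Fin.append_left]
        exact hf i
      · rw [Fin.append_right]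
        exact hg i
    · simp only [Fin.sum_univ_add, Fin.append_left, Fin.append_right]

theorem exists_trivial_relation_mod {V : Type*} [AddCommGroup V] [Module R V] [Module.Flat R V]
    {ι : Type*} [Fintype ι] {f : ι → R} {v : ι → V}
    (h : ∑ i, f i • v i ∈ I • (⊤ : Submodule R V)) :
    ∃ (k : ℕ) (r : ι → Fin k → R) (w : Fin k → V), (∀ i, v i = ∑ j, r i j • w j) ∧
      ∀ j, ∑ i, f i * r i j ∈ I := by
  obtain ⟨m, g, u, hg, hsum⟩ := exists_eq_sum_smul_of_mem_smul_top h
  have hrel : ∑ x : ι ⊕ Fin m, Sum.elim f (fun i => -g i) x • Sum.elim v u x = 0 := by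
    simp only [Fintype.sum_sum_type, Sum.elim_inl, Sum.elim_inr, neg_smul, Finset.sum_neg_distrib,
      hsum, add_neg_cancel]
  obtain ⟨k, r, w, hv, hr⟩ := Module.Flat.isTrivialRelation_of_sum_smul_eq_zero hrel
  refine ⟨k, fun i => r (Sum.inl i), w, fun i => hv (Sum.inl i), fun j => ?_⟩
  have hj := hr j
  simp only [Fintype.sum_sum_type, Sum.elim_inl, Sum.elim_inr] at hj
  rw [eq_neg_of_add_eq_zero_left hj]
  exact I.neg_mem (I.sum_mem fun i _ => I.mul_mem_right _ (I.neg_mem (hg i)))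

theorem mem_map_of_smul_mem_map {A : Type*} [CommRing A] [Algebra R A] [Module.Flat R A] {d : R}
    (hd : ∀ r, d * r ∈ I → r ∈ I) {x : A} (h : d • x ∈ I.map (algebraMap R A)) :
    x ∈ I.map (algebraMap R A) := by
  rw [← mem_smul_top_iff_mem_map] at h ⊢
  obtain ⟨k, r, w, hx, hr⟩ := exists_trivial_relation_mod (ι := Unit) (f := fun _ => d)
    (v := fun _ => x) (by rwa [Fintype.sum_unique])
  rw [hx ()]
  refine Submodule.sum_mem _ fun j _ => Submodule.smul_mem_smul (hd _ ?_) trivial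
  simpa only [Fintype.sum_unique] using hr j

variable {P Q : Type*} [CommRing P] [CommRing Q] [Algebra R P] [Algebra R Q] [Module.Flat R Q]
  {φ : P →ₐ[R] Q}

-- A trivial relation `∑ fᵢ • φ vᵢ ∈ I Q` lifts to `P` because `φ` is surjective modulo `I`.
theorem comap_smul_top_le (hsurj : AlmostSurjective ⊥ I φ) (hinj : AlmostInjective ⊥ J φ)
    (hIJ : I ≤ J) :
    (I • ⊤ : Submodule R Q).comap φ.toLinearMap ≤
      I • ⊤ ⊔ J • (I • ⊤ : Submodule R Q).comap φ.toLinearMap := by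
  rw [almostSurjective_bot_iff] at hsurj
  rw [almostInjective_bot_iff] at hinj
  intro x hx
  rw [Submodule.mem_comap, AlgHom.toLinearMap_apply] at hx
  have hxJ : φ x ∈ J.map (algebraMap R Q) :=
    (mem_smul_top_iff_mem_map _ _).1 (Submodule.smul_mono_left hIJ hx)
  have hxJ' : x ∈ J • (⊤ : Submodule R P) := (mem_smul_top_iff_mem_map _ _).2 (hinj x hxJ)
  obtain ⟨n, f, v, hf, rfl⟩ := exists_eq_sum_smul_of_mem_smul_top hxJ'
  simp only [map_sum, map_smul] at hx
  obtain ⟨k, r, w, hv, hr⟩ :=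
    exists_trivial_relation_mod (f := f) (v := fun i => φ (v i)) hx
  choose w' hw' using fun j => hsurj (w j)
  have hsplit : ∑ i, f i • v i =
      ∑ j, (∑ i, f i * r i j) • w' j + ∑ i, f i • (v i - ∑ j, r i j • w' j) := by
    simp only [smul_sub, Finset.sum_sub_distrib, Finset.sum_smul, Finset.smul_sum, mul_smul]
    rw [Finset.sum_comm, add_sub_cancel]
  rw [hsplit]
  refine Submodule.add_mem_sup
    (Submodule.sum_mem _ fun j _ => Submodule.smul_mem_smul (hr j) trivial)
    (Submodule.sum_mem _ fun i _ => Submodule.smul_mem_smul (hf i) ?_)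
  rw [Submodule.mem_comap, AlgHom.toLinearMap_apply, map_sub, hv, map_sum,
    ← Finset.sum_sub_distrib]
  refine Submodule.sum_mem _ fun j _ => ?_
  rw [map_smul, ← smul_sub]
  exact Submodule.smul_mem _ _ ((mem_smul_top_iff_mem_map _ _).2 (hw' j))

theorem AlmostSurjective.almostInjective_of_pow_le (hsurj : AlmostSurjective ⊥ J φ)
    (hinj : AlmostInjective ⊥ J φ) (hIJ : I ≤ J) {k : ℕ} (hk : J ^ k ≤ I) :
    AlmostInjective ⊥ I φ := by
  refine almostInjective_bot_iff.2 fun x hx => (mem_smul_top_iff_mem_map _ _).1 ?_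
  have hle : (I • ⊤ : Submodule R Q).comap φ.toLinearMap ≤ I • ⊤ :=
    (le_sup_pow_smul (comap_smul_top_le (hsurj.of_pow_le hk) hinj hIJ) k).trans
      (sup_le le_rfl (Submodule.smul_mono hk le_top))
  exact hle ((mem_smul_top_iff_mem_map _ _).2 hx)

end Flat

/-! ### Coordinate systems -/

section PolynomialExtension

variable {R A : Type*} [CommRing R] [CommRing A] [Algebra R A] {σ τ : Type*} {M : Submonoid R}
  {I : Ideal R}

theorem mem_map_mvPolynomial_iff {f : MvPolynomial σ A} :
    f ∈ I.map (algebraMap R (MvPolynomial σ A)) ↔ ∀ m, coeff m f ∈ I.map (algebraMap R A) := by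
  rw [← mem_map_C_iff, Ideal.map_map]
  rfl

theorem ker_mapAlgHom_le {A' : Type*} [CommRing A'] [Algebra R A'] {f : A →ₐ[R] A'}
    (hf : RingHom.ker f ≤ I.map (algebraMap R A)) :
    RingHom.ker (mapAlgHom f : MvPolynomial σ A →ₐ[R] MvPolynomial σ A') ≤
      I.map (algebraMap R (MvPolynomial σ A)) := by
  intro x hx
  refine mem_map_mvPolynomial_iff.2 fun m => hf ?_
  rw [RingHom.mem_ker] at hx ⊢
  exact (coeff_map _ x m).symm.trans (congrArg (coeff m) hx)

theorem eq_top_of_C_mem_of_X_mem (S : Subalgebra R (MvPolynomial σ A)) (hC : ∀ a, C a ∈ S)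
    (hX : ∀ i, X i ∈ S) : S = ⊤ := by
  refine Algebra.eq_top_iff.2 fun p => ?_
  induction p using MvPolynomial.induction_on with
  | C a => exact hC a
  | add p q hp hq => exact S.add_mem hp hq
  | mul_X p i hp => exact S.mul_mem hp (hX i)

theorem eq_top_of_C_X_mem_of_X_mem (S : Subalgebra R (MvPolynomial σ (MvPolynomial τ R)))
    (hC : ∀ i, C (X i) ∈ S) (hX : ∀ i, X i ∈ S) : S = ⊤ := by
  have hcomap : S.comap (IsScalarTower.toAlgHom R (MvPolynomial τ R) _) = ⊤ :=
    eq_top_of_C_mem_of_X_mem _ (fun r => S.algebraMap_mem r) hC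
  exact eq_top_of_C_mem_of_X_mem S (fun p => (Algebra.eq_top_iff.1 hcomap p :)) hX

theorem smul_C (r : R) (a : A) : r • (C a : MvPolynomial σ A) = C (r • a) := by
  simp only [C_apply, smul_monomial]

theorem isSMulRegular_mvPolynomial {π : R} (h : IsSMulRegular A π) :
    IsSMulRegular (MvPolynomial σ A) π := fun p q hpq => by
  ext m
  exact h (by simpa only [coeff_smul] using congrArg (coeff m) hpq)

variable {P : Type*} [CommRing P] [Algebra R P] {φ : P →ₐ[R] A}

theorem AlmostSurjective.mapAlgHom (h : AlmostSurjective M I φ) :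
    AlmostSurjective M I (mapAlgHom (σ := σ) φ) := by
  have htop : nearRange M I (MvPolynomial.mapAlgHom (σ := σ) φ) = ⊤ := by
    refine eq_top_of_C_mem_of_X_mem _ (fun a => ?_) fun i => range_le_nearRange ⟨X i, by simp⟩
    obtain ⟨d, hd, x, hx⟩ := h a
    refine ⟨d, hd, C x, ?_⟩
    rw [mapAlgHom_apply, map_C, smul_C, ← map_sub]
    exact map_mem_map (IsScalarTower.toAlgHom R A (MvPolynomial σ A)) hx
  exact fun y => (Algebra.eq_top_iff.1 htop y :)

theorem AlmostInjective.mapAlgHom (h : AlmostInjective M I φ) :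
    AlmostInjective M I (mapAlgHom (σ := σ) φ) := by
  intro f hf
  rw [mem_map_mvPolynomial_iff] at hf
  obtain ⟨d, hd, hdf⟩ := exists_mem_forall_finset M f.support
    (p := fun m d => d • coeff m f ∈ I.map (algebraMap R P))
    (fun m d c h => by rw [mul_smul]; exact Submodule.smul_of_tower_mem _ c h)
    fun m _ => h _ (by
      have := hf m
      rwa [mapAlgHom_apply, coeff_map] at this)
  refine ⟨d, hd, mem_map_mvPolynomial_iff.2 fun m => ?_⟩
  rw [coeff_smul]
  by_cases hm : m ∈ f.support
  · exact hdf m hm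
  · rw [notMem_support_iff.1 hm, smul_zero]
    exact zero_mem _

end PolynomialExtension

section CoordinateSystem

variable (R B : Type*) {A : Type*} [CommRing R] [CommRing B] [CommRing A] [Algebra R B]
  [Algebra R A] [Algebra B A] [IsScalarTower R B A]

/-- The family `Y` consists of coordinates of the `B`-algebra `A` modulo `I` after inverting `M`:
the evaluation `B[X] → A` at `Y` becomes an isomorphism. For `M = ⊥` and `I = ⊥` this says that
`A` is a polynomial ring over `B` in the variables `Y`. -/
def IsCoordinateSystem (M : Submonoid R) (I : Ideal R) {σ : Type*} (Y : σ → A) : Prop :=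
  AlmostSurjective M I ((aeval Y : MvPolynomial σ B →ₐ[B] A).restrictScalars R) ∧
    AlmostInjective M I ((aeval Y : MvPolynomial σ B →ₐ[B] A).restrictScalars R)

variable {R B} {M : Submonoid R} {I : Ideal R} {σ τ : Type*} {Y : σ → A}

theorem isCoordinateSystem_iff_of_ker_le {B' A' : Type*} [CommRing B'] [CommRing A']
    [Algebra R B'] [Algebra R A'] [Algebra B' A'] [IsScalarTower R B' A'] {Y' : τ → A'}
    {p : MvPolynomial σ B →ₐ[R] MvPolynomial τ B'} {q : A →ₐ[R] A'}
    (hp : Function.Surjective p) (hq : Function.Surjective q)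
    (hkerp : RingHom.ker p ≤ I.map (algebraMap R (MvPolynomial σ B)))
    (hkerq : RingHom.ker q ≤ I.map (algebraMap R A)) (h : ∀ x, aeval Y' (p x) = q (aeval Y x)) :
    IsCoordinateSystem R B' M I Y' ↔ IsCoordinateSystem R B M I Y :=
  and_congr (almostSurjective_iff_of_ker_le hp hq hkerq (AlgHom.ext h))
    (almostInjective_iff_of_ker_le hp hq hkerp hkerq (AlgHom.ext h))

theorem isCoordinateSystem_iff_of_algEquiv {A' : Type*} [CommRing A'] [Algebra R A'] [Algebra B A']
    [IsScalarTower R B A'] {Y' : τ → A'} (e : MvPolynomial σ B ≃ₐ[B] MvPolynomial τ B)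
    (f : A ≃ₐ[B] A') (h : ∀ x, aeval Y' (e x) = f (aeval Y x)) :
    IsCoordinateSystem R B M I Y' ↔ IsCoordinateSystem R B M I Y :=
  isCoordinateSystem_iff_of_ker_le (p := (e.restrictScalars R : _ →ₐ[R] _))
    (q := (f.restrictScalars R : _ →ₐ[R] _)) e.surjective f.surjective
    (((RingHom.injective_iff_ker_eq_bot _).1 e.injective).trans_le bot_le)
    (((RingHom.injective_iff_ker_eq_bot _).1 f.injective).trans_le bot_le) h

theorem IsCoordinateSystem.comp_equiv (h : IsCoordinateSystem R B M I Y) (e : τ ≃ σ) :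
    IsCoordinateSystem R B M I (Y ∘ e) :=
  (isCoordinateSystem_iff_of_algEquiv (renameEquiv B e.symm) AlgEquiv.refl fun x => by
    rw [renameEquiv_apply, aeval_rename, Function.comp_assoc, e.self_comp_symm]; rfl).2 h

theorem IsCoordinateSystem.map_algEquiv {A' : Type*} [CommRing A'] [Algebra R A'] [Algebra B A']
    [IsScalarTower R B A'] (h : IsCoordinateSystem R B M I Y) (f : A ≃ₐ[B] A') :
    IsCoordinateSystem R B M I (f ∘ Y) :=
  (isCoordinateSystem_iff_of_algEquiv AlgEquiv.refl f fun x =>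
    (comp_aeval_apply Y (f : A →ₐ[B] A') x).symm).2 h

theorem IsCoordinateSystem.mvPolynomial (h : IsCoordinateSystem R B M I Y) :
    IsCoordinateSystem R B M I (Sum.elim X (C ∘ Y) : τ ⊕ σ → MvPolynomial τ A) := by
  let φ := (aeval Y : MvPolynomial σ B →ₐ[B] A)
  let ψ := (aeval (Sum.elim X (C ∘ Y)) : MvPolynomial (τ ⊕ σ) B →ₐ[B] MvPolynomial τ A)
  let e := (sumAlgEquiv B τ σ).toAlgHom
  have hcomp : (MvPolynomial.mapAlgHom φ).comp e = ψ := by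
    refine algHom_ext fun i => ?_
    cases i <;> simp [φ, ψ, e]
  have hcompR : (MvPolynomial.mapAlgHom (σ := τ) (φ.restrictScalars R)).comp
      (e.restrictScalars R) = (AlgHom.id R _).comp (ψ.restrictScalars R) :=
    AlgHom.ext fun x => AlgHom.congr_fun hcomp x
  have hkere : RingHom.ker (e.restrictScalars R) ≤ I.map (algebraMap R _) :=
    ((RingHom.injective_iff_ker_eq_bot _).1 (sumAlgEquiv B τ σ).injective).trans_le bot_le
  have hkerid : RingHom.ker (AlgHom.id R (MvPolynomial τ A)) ≤ I.map (algebraMap R _) :=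
    ((RingHom.injective_iff_ker_eq_bot _).1 Function.injective_id).trans_le bot_le
  exact ⟨(almostSurjective_iff_of_ker_le (sumAlgEquiv B τ σ).surjective Function.surjective_id
      hkerid hcompR).1 h.1.mapAlgHom,
    (almostInjective_iff_of_ker_le (sumAlgEquiv B τ σ).surjective Function.surjective_id hkere
      hkerid hcompR).1 h.2.mapAlgHom⟩

theorem isCoordinateSystem_self_iff :
    IsCoordinateSystem B B (M.map (algebraMap R B)) (I.map (algebraMap R B)) Y ↔
      IsCoordinateSystem R B M I Y := by
  simp only [IsCoordinateSystem, AlmostSurjective, AlmostInjective, Ideal.map_map,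
    ← IsScalarTower.algebraMap_eq, Submonoid.mem_map, exists_exists_and_eq_and, algebraMap_smul]
  rfl

theorem isCoordinateSystem_map_iff {B' A' : Type*} [CommRing B'] [CommRing A'] [Algebra R B']
    [Algebra R A'] [Algebra B' A'] [IsScalarTower R B' A'] {f : B →ₐ[R] B'} {g : A →ₐ[R] A'}
    (hfg : ∀ b, g (algebraMap B A b) = algebraMap B' A' (f b)) (hf : Function.Surjective f)
    (hg : Function.Surjective g) (hkerf : RingHom.ker f ≤ I.map (algebraMap R B))
    (hkerg : RingHom.ker g ≤ I.map (algebraMap R A)) :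
    IsCoordinateSystem R B' M I (g ∘ Y) ↔ IsCoordinateSystem R B M I Y := by
  refine isCoordinateSystem_iff_of_ker_le (p := mapAlgHom f) (map_surjective _ hf) hg
    (ker_mapAlgHom_le hkerf) hkerg fun x => ?_
  induction x using MvPolynomial.induction_on with
  | C b => simp [hfg]
  | add x y hx hy => simp only [map_add, hx, hy]
  | mul_X x i hx =>
    simp only [map_mul, hx]
    simp

theorem isCoordinateSystem_of_algEquiv (e : MvPolynomial σ B ≃ₐ[B] A) :
    IsCoordinateSystem R B M I (e ∘ X) := by
  have haeval : aeval (e ∘ X) = (e : MvPolynomial σ B →ₐ[B] A) := algHom_ext fun i => by simp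
  refine ⟨fun a => ⟨1, M.one_mem, e.symm a, ?_⟩, fun p hp => ⟨1, M.one_mem, ?_⟩⟩
  · simp [haeval]
  · rw [haeval] at hp
    simpa using map_mem_map (e.symm.restrictScalars R : A →ₐ[R] MvPolynomial σ B) hp

theorem IsCoordinateSystem.nonempty_algEquiv (h : IsCoordinateSystem R B ⊥ ⊥ Y) :
    Nonempty (MvPolynomial σ B ≃ₐ[B] A) := by
  refine ⟨AlgEquiv.ofBijective (aeval Y) ⟨?_, fun a => ?_⟩⟩
  · refine (injective_iff_map_eq_zero _).2 fun p hp => ?_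
    simpa [hp] using almostInjective_bot_iff.1 h.2 p
  · obtain ⟨p, hp⟩ := almostSurjective_bot_iff.1 h.1 a
    exact ⟨p, (sub_eq_zero.1 (by simpa using hp)).symm⟩

theorem IsCoordinateSystem.of_pow_le [Module.Flat R A] {J : Ideal R}
    (h : IsCoordinateSystem R B ⊥ J Y) (hIJ : I ≤ J) {k : ℕ} (hk : J ^ k ≤ I) :
    IsCoordinateSystem R B ⊥ I Y :=
  ⟨h.1.of_pow_le hk, h.1.almostInjective_of_pow_le h.2 hIJ hk⟩

end CoordinateSystem

/-! ### Patching coordinates along a nonzerodivisor -/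

section PolynomialIdentities

variable {B : Type*} [CommRing B] {σ τ : Type*}

theorem derivation_aeval {A V : Type*} [CommRing A] [Algebra B A] [AddCommGroup V] [Module A V]
    [Module B V] [IsScalarTower B A V] [Fintype σ] (D : Derivation B A V) (z : σ → A)
    (p : MvPolynomial σ B) : D (aeval z p) = ∑ i, aeval z (pderiv i p) • D (z i) := by
  classical
  induction p using MvPolynomial.induction_on with
  | C b => simp
  | add p q hp hq => simp only [map_add, hp, hq, add_smul, Finset.sum_add_distrib]
  | mul_X p j hp =>
    simp only [Derivation.leibniz, smul_eq_mul, map_add, map_mul, aeval_X, pderiv_X, add_smul,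
      Finset.sum_add_distrib, hp, Pi.single_apply, apply_ite, map_zero, mul_one, mul_zero,
      ite_smul, zero_smul, Finset.sum_ite_eq, Finset.mem_univ, if_true, Finset.smul_sum, mul_smul]

theorem exists_aeval_add_smul_eq {S : Type*} [CommRing S] [Algebra B S] [Fintype σ]
    (p : MvPolynomial σ B) (x u : σ → S) (t : B) :
    ∃ w, aeval (fun i => x i + t • u i) p =
      aeval x p + t • ∑ i, aeval x (pderiv i p) * u i + t ^ 2 • w := by
  classical
  induction p using MvPolynomial.induction_on with
  | C b => exact ⟨0, by simp⟩
  | add p q hp hq =>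
    obtain ⟨w, hw⟩ := hp
    obtain ⟨w', hw'⟩ := hq
    refine ⟨w + w', ?_⟩
    simp only [map_add, hw, hw', add_mul, Finset.sum_add_distrib, smul_add]
    ring
  | mul_X p j hp =>
    obtain ⟨w, hw⟩ := hp
    refine ⟨w * (x j + t • u j) + (∑ i, aeval x (pderiv i p) * u i) * u j, ?_⟩
    have hsum : ∑ i, aeval x (pderiv i (p * X j)) * u i =
        aeval x p * u j + x j * ∑ i, aeval x (pderiv i p) * u i := by
      simp only [Derivation.leibniz, smul_eq_mul, map_add, map_mul, aeval_X, pderiv_X, add_mul,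
        Finset.sum_add_distrib, Pi.single_apply, apply_ite, map_zero, mul_one, mul_zero,
        ite_mul, zero_mul, Finset.sum_ite_eq, Finset.mem_univ, if_true, Finset.mul_sum, mul_assoc]
    rw [hsum, map_mul, aeval_X, hw, map_mul, aeval_X]
    simp only [Algebra.smul_def, map_pow]
    ring

theorem aeval_sub_aeval_mem {S : Type*} [CommRing S] [Algebra B S] {J : Ideal S} {y z : σ → S}
    (h : ∀ i, y i - z i ∈ J) (p : MvPolynomial σ B) : aeval y p - aeval z p ∈ J := by
  have hyz : (Ideal.Quotient.mkₐ B J).comp (aeval y) = (Ideal.Quotient.mkₐ B J).comp (aeval z) :=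
    algHom_ext fun i => by simpa using Ideal.Quotient.eq.2 (h i)
  exact Ideal.Quotient.eq.1 (AlgHom.congr_fun hyz p)

variable {A S : Type*} [CommRing A] [CommRing S] [Algebra B A] [Algebra B S] {I : Ideal B}

theorem aeval_sub_aeval_mem_of_almostInjective {z : σ → A}
    (hz : AlmostInjective ⊥ I (aeval z : MvPolynomial σ B →ₐ[B] A)) {x : σ → S}
    {g : τ → MvPolynomial σ B} {y : τ → A} (hy : ∀ j, y j - aeval z (g j) ∈ I.map (algebraMap B A))
    {y' : τ → S} (hy' : ∀ j, y' j - aeval x (g j) ∈ I.map (algebraMap B S))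
    {p : MvPolynomial τ B} {q : MvPolynomial σ B}
    (h : aeval y p - aeval z q ∈ I.map (algebraMap B A)) :
    aeval y' p - aeval x q ∈ I.map (algebraMap B S) := by
  have hpq : aeval g p - q ∈ I.map (algebraMap B (MvPolynomial σ B)) := by
    refine almostInjective_bot_iff.1 hz _ ?_
    rw [map_sub, comp_aeval_apply]
    simpa using sub_mem h (aeval_sub_aeval_mem hy p)
  have hx := map_mem_map (aeval x : MvPolynomial σ B →ₐ[B] S) hpq
  rw [map_sub, comp_aeval_apply] at hx
  simpa using add_mem (aeval_sub_aeval_mem hy' p) hx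

end PolynomialIdentities

section Extension

variable {R P A S V : Type*} [CommRing R] [CommRing P] [CommRing A] [CommRing S] [Algebra R P]
  [Algebra R A] [Algebra R S] [AddCommGroup V] [Module R V] {π : R}

theorem AlmostSurjective.linearMap_ext {φ : P →ₐ[R] A}
    (hφ : AlmostSurjective (Submonoid.powers π) ⊥ φ) (hπ : IsSMulRegular V π) {f g : A →ₗ[R] V}
    (h : ∀ p, f (φ p) = g (φ p)) : f = g := by
  refine LinearMap.ext fun a => ?_
  obtain ⟨N, p, hp⟩ := almostSurjective_powers_bot_iff.1 hφ a
  refine hπ.pow N ?_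
  simp only [← map_smul, hp, h]

-- `ι` is read off the closure of the graph of `τ ∘ φ⁻¹` under division by powers of `π`.
theorem exists_comp_eq_of_adjoin_eq_top {φ : P →ₐ[R] A} (hφ : Function.Injective φ)
    (τ : P →ₐ[R] S) (hπ : IsSMulRegular S π) {G : Set A} (hG : Algebra.adjoin R G = ⊤)
    (h : ∀ a ∈ G, ∃ c, (a, c) ∈ nearRange (Submonoid.powers π) ⊥ (φ.prod τ)) :
    ∃ ι : A →ₐ[R] S, ι.comp φ = τ := by
  let Γ := nearRange (Submonoid.powers π) ⊥ (φ.prod τ)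
  let fst : Γ →ₐ[R] A := (AlgHom.fst R A S).comp Γ.val
  have hinj : Function.Injective fst := by
    refine (injective_iff_map_eq_zero _).2 ?_
    rintro ⟨⟨a, c⟩, _, ⟨N, rfl⟩, p, hp⟩ (rfl : a = 0)
    obtain ⟨hp₁, hp₂⟩ : φ p = 0 ∧ π ^ N • c = τ p := by
      simpa [sub_eq_zero, Ideal.map_bot, Prod.ext_iff] using hp
    obtain rfl := (map_eq_zero_iff φ hφ).1 hp₁
    obtain rfl := (hπ.pow N).right_eq_zero_of_smul (hp₂.trans (map_zero τ))
    rfl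
  have hsurj : Function.Surjective fst := by
    rw [← AlgHom.range_eq_top, eq_top_iff, ← hG, Algebra.adjoin_le_iff]
    intro a ha
    obtain ⟨c, hc⟩ := h a ha
    exact ⟨⟨(a, c), hc⟩, rfl⟩
  let e := AlgEquiv.ofBijective fst ⟨hinj, hsurj⟩
  refine ⟨((AlgHom.snd R A S).comp Γ.val).comp e.symm.toAlgHom, AlgHom.ext fun p => ?_⟩
  have he : e.symm (φ p) = ⟨φ.prod τ p, range_le_nearRange ⟨p, rfl⟩⟩ := by
    rw [AlgEquiv.symm_apply_eq]
    rfl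
  change (e.symm (φ p)).1.2 = τ p
  rw [he]
  rfl

theorem AlmostSurjective.exists_pow_smul_mem_range {φ : P →ₐ[R] A}
    (hφ : AlmostSurjective (Submonoid.powers π) ⊥ φ) (s : Finset A) :
    ∃ N : ℕ, ∀ a ∈ s, ∃ p, π ^ N • a = φ p := by
  obtain ⟨_, ⟨N, rfl⟩, hN⟩ := exists_mem_forall_finset (Submonoid.powers π) s
    (p := fun a d => ∃ p, d • a = φ p)
    (fun a d c ⟨p, hp⟩ => ⟨c • p, by rw [mul_smul, hp, map_smul]⟩)
    fun a _ => by
      obtain ⟨N, p, hp⟩ := almostSurjective_powers_bot_iff.1 hφ a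
      exact ⟨π ^ N, ⟨N, rfl⟩, p, hp⟩
  exact ⟨N, hN⟩

end Extension

noncomputable section

section PatchingData

variable {B A : Type*} [CommRing B] [CommRing A] [Algebra B A] {π : B} {κ : Type*} [Fintype κ]
  {Y Z : κ → A}

variable (π Y Z) in
/-- Let `Y` and `Z` be coordinates of `A` over `B` after inverting `π` and modulo `π`, respectively.
These data write `Yⱼ = gⱼ(Z) + π ^ e • cⱼ` and present `A` as a retract of the polynomial ring in
variables `xᵢ` (`X (inl i)`) and `vⱼ` (`X (inr j)`): the retraction is `x ↦ Z`, `v ↦ c`, and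
`ι` sends `Yⱼ` to `gⱼ(x) + π ^ e • vⱼ`. Up to the correction `π • wⱼ`, the differences between
the variables and their images under the composite of `ι` with the retraction satisfy the linear
relations obtained by differentiating the equations for `Yⱼ`. -/
structure PatchingData where
  e : ℕ
  g : κ → MvPolynomial κ B
  c : κ → A
  ι : A →ₐ[B] MvPolynomial (κ ⊕ κ) B
  w : κ → MvPolynomial (κ ⊕ κ) B
  ι_Y : ∀ j, ι (Y j) = rename Sum.inl (g j) + π ^ e • X (Sum.inr j)
  aeval_ι : ∀ a, aeval (Sum.elim Z c) (ι a) = a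
  sum_mul_eq_zero : ∀ j, ∑ i, ι (aeval Z (pderiv i (g j))) * (X (Sum.inl i) - ι (Z i)) +
    π ^ e • (X (Sum.inr j) + π • w j - ι (c j)) = 0

theorem aeval_X_comp {σ τ : Type*} (f : σ → τ) (p : MvPolynomial σ B) :
    aeval (X ∘ f : σ → MvPolynomial τ B) p = rename f p := by
  rw [← aeval_rename, aeval_X_left_apply]

theorem pow_smul_mem_map_span_pow {S : Type*} [CommRing S] [Algebra B S] {m n : ℕ} (h : m ≤ n)
    (x : S) : π ^ n • x ∈ (Ideal.span {π ^ m}).map (algebraMap B S) :=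
  smul_mem_map_of_mem (Ideal.mem_span_singleton.2 (pow_dvd_pow π h)) x

-- A polynomial relation between `Y` and `Z` modulo `π ^ m` persists for the images, by injectivity
-- of `aeval Z` modulo `π ^ m`. Hence `aeval Y p = π ^ N • a` forces `π ^ N` to divide the image of
-- `p`, and `aeval Y p = π ^ N • Z i` makes that image agree with `π ^ N • xᵢ` modulo
-- `π ^ (2 N + 1)`.
omit [Fintype κ] in
theorem exists_algHom_map_Y [Finite κ] [Algebra.FiniteType B A] (hπB : IsSMulRegular B π)
    (hπA : IsSMulRegular A π) (hY : Function.Injective (aeval Y : MvPolynomial κ B →ₐ[B] A))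
    (hY' : AlmostSurjective (Submonoid.powers π) ⊥ (aeval Y : MvPolynomial κ B →ₐ[B] A))
    (hZ : AlmostInjective ⊥ (Ideal.span {π}) (aeval Z : MvPolynomial κ B →ₐ[B] A)) :
    ∃ N : ℕ, ∀ (g : κ → MvPolynomial κ B) (c : κ → A),
      (∀ j, Y j = aeval Z (g j) + π ^ (2 * N + 1) • c j) →
      ∃ (ι : A →ₐ[B] MvPolynomial (κ ⊕ κ) B) (u : κ → MvPolynomial (κ ⊕ κ) B),
        (∀ j, ι (Y j) = rename Sum.inl (g j) + π ^ (2 * N + 1) • X (Sum.inr j)) ∧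
        ∀ i, X (Sum.inl i) = ι (Z i) + π ^ (N + 1) • u i := by
  classical
  have := Fintype.ofFinite κ
  have hπS : IsSMulRegular (MvPolynomial (κ ⊕ κ) B) π := isSMulRegular_mvPolynomial hπB
  obtain ⟨G, hG⟩ := ‹Algebra.FiniteType B A›.out
  obtain ⟨N, hN⟩ := hY'.exists_pow_smul_mem_range (G ∪ Finset.univ.image Z)
  refine ⟨N, fun g c hgc => ?_⟩
  let τ : MvPolynomial κ B →ₐ[B] MvPolynomial (κ ⊕ κ) B :=
    aeval fun j => aeval (X ∘ Sum.inl) (g j) + π ^ (2 * N + 1) • X (Sum.inr j)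
  have hτ (m : ℕ) (hm : m ≤ 2 * N + 1) (p q : MvPolynomial κ B)
      (h : aeval Y p - aeval Z q ∈ (Ideal.span {π ^ m}).map (algebraMap B A)) :
      τ p - aeval (X ∘ Sum.inl) q ∈
        (Ideal.span {π ^ m}).map (algebraMap B (MvPolynomial (κ ⊕ κ) B)) :=
    aeval_sub_aeval_mem_of_almostInjective (hZ.span_pow hπA m)
      (fun j => by
        rw [hgc, add_sub_cancel_left]
        exact pow_smul_mem_map_span_pow hm _)
      (fun j => by
        rw [add_sub_cancel_left]
        exact pow_smul_mem_map_span_pow hm _) h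
  obtain ⟨ι, hι⟩ := exists_comp_eq_of_adjoin_eq_top hY τ hπS hG fun a ha => by
    obtain ⟨p, hp⟩ := hN a (Finset.mem_union_left _ ha)
    obtain ⟨c, hc⟩ := mem_map_span_singleton_iff.1 (hτ N (by lia) p 0 (by
      rw [map_zero, sub_zero, ← hp]
      exact pow_smul_mem_map_span_pow le_rfl _))
    refine ⟨c, π ^ N, ⟨N, rfl⟩, p, ?_⟩
    rw [map_zero, sub_zero] at hc
    simp [hp, hc, Ideal.map_bot]
  have hιY (p : MvPolynomial κ B) : ι (aeval Y p) = τ p := AlgHom.congr_fun hι p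
  have hιZ (i : κ) : ∃ u, X (Sum.inl i) = ι (Z i) + π ^ (N + 1) • u := by
    obtain ⟨p, hp⟩ := hN (Z i) (Finset.mem_union_right _ (Finset.mem_image_of_mem Z (by simp)))
    obtain ⟨u, hu⟩ := mem_map_span_singleton_iff.1 (hτ (2 * N + 1) le_rfl p (π ^ N • X i) (by
      simp [← hp]))
    refine ⟨-u, hπS.pow N ?_⟩
    rw [← hιY, ← hp, map_smul, map_smul, aeval_X, Function.comp_apply, sub_eq_iff_eq_add,
      show 2 * N + 1 = N + (N + 1) by lia, pow_add, mul_smul] at hu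
    simp only [smul_add, smul_neg, hu]
    abel
  choose u hu using hιZ
  exact ⟨ι, u, fun j => by simpa only [aeval_X, τ, aeval_X_comp] using hιY (X j), hu⟩

theorem PatchingData.nonempty [Algebra.FiniteType B A] (hπB : IsSMulRegular B π)
    (hπA : IsSMulRegular A π) (hY : Function.Injective (aeval Y : MvPolynomial κ B →ₐ[B] A))
    (hY' : AlmostSurjective (Submonoid.powers π) ⊥ (aeval Y : MvPolynomial κ B →ₐ[B] A))
    (hZ : AlmostInjective ⊥ (Ideal.span {π}) (aeval Z : MvPolynomial κ B →ₐ[B] A))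
    (hZ' : AlmostSurjective ⊥ (Ideal.span {π}) (aeval Z : MvPolynomial κ B →ₐ[B] A)) :
    Nonempty (PatchingData π Y Z) := by
  obtain ⟨N, hN⟩ := exists_algHom_map_Y hπB hπA hY hY' hZ
  have hmod := almostSurjective_bot_iff.1
    (hZ'.of_pow_le (I := Ideal.span {π ^ (2 * N + 1)}) (Ideal.span_singleton_pow π _).le)
  simp only [mem_map_span_singleton_iff, sub_eq_iff_eq_add'] at hmod
  choose g c hgc using fun j => hmod (Y j)
  obtain ⟨ι, u, hιY, hu⟩ := hN g c hgc
  choose w hw using fun j => exists_aeval_add_smul_eq (g j) (ι ∘ Z) u (π ^ (N + 1))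
  have hretract : (aeval (Sum.elim Z c)).toLinearMap ∘ₗ ι.toLinearMap = LinearMap.id :=
    hY'.linearMap_ext hπA fun p => by
      have : ((aeval (Sum.elim Z c)).comp ι).comp (aeval Y) = aeval Y := algHom_ext fun j => by
        rw [AlgHom.comp_apply, AlgHom.comp_apply, aeval_X, hιY, map_add, map_smul, aeval_rename,
          aeval_X, hgc, Sum.elim_comp_inl, Sum.elim_inr]
      exact AlgHom.congr_fun this p
  refine ⟨⟨2 * N + 1, g, c, ι, w, hιY, LinearMap.congr_fun hretract, fun j => ?_⟩⟩
  have hx : (fun i => (ι ∘ Z) i + π ^ (N + 1) • u i) = X ∘ Sum.inl := funext fun i => (hu i).symm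
  have hsum : ∑ i, ι (aeval Z (pderiv i (g j))) * (X (Sum.inl i) - ι (Z i)) =
      π ^ (N + 1) • ∑ i, aeval (ι ∘ Z) (pderiv i (g j)) * u i := by
    rw [Finset.smul_sum]
    refine Finset.sum_congr rfl fun i _ => ?_
    rw [hu, add_sub_cancel_left, mul_smul_comm, comp_aeval_apply, Function.comp_def]
  have hιg : ι (Y j) = aeval (ι ∘ Z) (g j) + π ^ (2 * N + 1) • ι (c j) := by
    rw [hgc, map_add, map_smul, comp_aeval_apply, Function.comp_def]
  have hπ : π ^ (2 * N + 1) • π • w j = (π ^ (N + 1)) ^ 2 • w j := by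
    rw [← mul_smul]
    ring_nf
  have hYj := hιY j
  rw [hιg, ← aeval_X_comp, ← hx, hw, ← hsum, ← hπ] at hYj
  rw [smul_sub, smul_add]
  linear_combination -hYj

end PatchingData

section Retract

variable {B A N : Type*} [CommRing B] [CommRing A] [Algebra B A] {ζ : N → A}
  {ι : A →ₐ[B] MvPolynomial N B}

/-- If `A` is a retract of a polynomial ring with section `ι`, this is the derivation of `A` whose
components are the partial derivatives of `ι`, evaluated by the retraction. It lifts to a section of
the surjection onto `Ω[A⁄B]` given by the differentials of the images of the variables. -/
def retractDerivation (h : ∀ a, aeval ζ (ι a) = a) : Derivation B A (N → A) :=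
  Derivation.mk' (LinearMap.pi fun x =>
    (aeval ζ).toLinearMap ∘ₗ (pderiv (R := B) x).toLinearMap ∘ₗ ι.toLinearMap) fun a b => by
      ext x
      simp [h]

theorem retractDerivation_apply (h : ∀ a, aeval ζ (ι a) = a) (a : A) (x : N) :
    retractDerivation h a x = aeval ζ (pderiv x (ι a)) :=
  rfl

theorem linearCombination_liftKaehlerDifferential_retractDerivation [Fintype N]
    (h : ∀ a, aeval ζ (ι a) = a) (ω : Ω[A⁄B]) :
    Fintype.linearCombination A (fun x => KaehlerDifferential.D B A (ζ x))
      ((retractDerivation h).liftKaehlerDifferential ω) = ω := by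
  suffices hid : Fintype.linearCombination A (fun x => KaehlerDifferential.D B A (ζ x)) ∘ₗ
      (retractDerivation h).liftKaehlerDifferential = LinearMap.id from LinearMap.congr_fun hid ω
  refine Derivation.liftKaehlerDifferential_unique _ _ (Derivation.ext fun a => ?_)
  calc Fintype.linearCombination A (fun x => KaehlerDifferential.D B A (ζ x))
        ((retractDerivation h).liftKaehlerDifferential (KaehlerDifferential.D B A a))
    _ = ∑ x, aeval ζ (pderiv x (ι a)) • KaehlerDifferential.D B A (ζ x) := by
      rw [Derivation.liftKaehlerDifferential_comp_D, Fintype.linearCombination_apply]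
      rfl
    _ = KaehlerDifferential.D B A a := by rw [← derivation_aeval, h]

end Retract

section Splitting

variable {B A : Type*} [CommRing B] [CommRing A] [Algebra B A] {π : B} {κ : Type*} [Fintype κ]
  {Y Z : κ → A}

/-- The differences between the variables `x`, `v` and their images under the composite of the
retraction with its section, corrected by `π • w`. -/
def PatchingData.discrepancy (D : PatchingData π Y Z) : κ ⊕ κ → MvPolynomial (κ ⊕ κ) B :=
  Sum.elim (fun i => X (Sum.inl i) - D.ι (Z i))
    fun j => X (Sum.inr j) + π • D.w j - D.ι (D.c j)

/-- The splitting of the differentials of `x`, `v` induced by the retraction of `PatchingData`. -/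
def PatchingData.splitting (D : PatchingData π Y Z) : Ω[A⁄B] →ₗ[A] (κ ⊕ κ → A) :=
  (retractDerivation D.aeval_ι).liftKaehlerDifferential

theorem pderiv_inr_rename_inl {σ τ : Type*} (j : τ) (p : MvPolynomial σ B) :
    pderiv (Sum.inr j) (rename Sum.inl p : MvPolynomial (σ ⊕ τ) B) = 0 :=
  pderiv_eq_zero_of_notMem_vars fun h => by simpa using mem_vars_rename _ _ h

namespace PatchingData

theorem sum_retractDerivation_mul_discrepancy (D : PatchingData π Y Z) (k : κ) :
    ∑ x, D.ι (retractDerivation D.aeval_ι (Y k) x) * D.discrepancy x = 0 := by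
  classical
  have hinl (i : κ) :
      retractDerivation D.aeval_ι (Y k) (Sum.inl i) = aeval Z (pderiv i (D.g k)) := by
    rw [retractDerivation_apply, D.ι_Y, map_add, pderiv_rename Sum.inl_injective,
      Derivation.map_smul, pderiv_X_of_ne Sum.inr_ne_inl, smul_zero, add_zero, aeval_rename,
      Sum.elim_comp_inl]
  have hinr (j : κ) :
      retractDerivation D.aeval_ι (Y k) (Sum.inr j) =
        if k = j then algebraMap B A (π ^ D.e) else 0 := by
    rw [retractDerivation_apply, D.ι_Y, map_add, pderiv_inr_rename_inl, zero_add,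
      Derivation.map_smul, pderiv_X, map_smul, Pi.single_apply, apply_ite (aeval _)]
    simp [Algebra.smul_def]
  rw [← D.sum_mul_eq_zero k, Fintype.sum_sum_type]
  simp only [hinl, hinr, discrepancy, Sum.elim_inl, Sum.elim_inr, apply_ite D.ι, map_zero, ite_mul,
    zero_mul, Finset.sum_ite_eq, Finset.mem_univ, if_true, D.ι.commutes, Algebra.smul_def (π ^ D.e)]

theorem sum_splitting_mul_discrepancy (D : PatchingData π Y Z) (hπ : IsSMulRegular B π)
    (hY : AlmostSurjective (Submonoid.powers π) ⊥ (aeval Y : MvPolynomial κ B →ₐ[B] A))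
    (ω : Ω[A⁄B]) : ∑ x, D.ι (D.splitting ω x) * D.discrepancy x = 0 := by
  let _ : Algebra A (MvPolynomial (κ ⊕ κ) B) := D.ι.toAlgebra
  have _ : IsScalarTower B A (MvPolynomial (κ ⊕ κ) B) := .of_algHom D.ι
  let pairing := Fintype.linearCombination A D.discrepancy
  let δ := pairing.compDer (retractDerivation D.aeval_ι)
  have hδ (a : A) : δ a = 0 := by
    suffices (δ : A →ₗ[B] MvPolynomial (κ ⊕ κ) B) = 0 from LinearMap.congr_fun this a
    refine hY.linearMap_ext (isSMulRegular_mvPolynomial hπ) fun p => ?_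
    rw [Derivation.coeFn_coe, derivation_aeval, LinearMap.zero_apply]
    exact Finset.sum_eq_zero fun k _ =>
      (congrArg _ (D.sum_retractDerivation_mul_discrepancy k)).trans (smul_zero _)
  suffices pairing ∘ₗ D.splitting = 0 from LinearMap.congr_fun this ω
  refine Derivation.liftKaehlerDifferential_unique _ _ (Derivation.ext fun a => ?_)
  exact (congrArg pairing (Derivation.liftKaehlerDifferential_comp_D _ a)).trans (hδ a)

end PatchingData

end Splitting

-- The components of `f` are the values on the standard basis of the map
-- `(N → A) × (s → A) → M × (s → A) ≃ (t → A) → T` given by `q`, `E` and `x`, plus the map given by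
-- `u`; the summand of `u` vanishes on the image of `σ`, and that of `E` on the kernel of `q`.
theorem exists_forall_mem_span_range {A M T N s t : Type*} [CommRing A] [AddCommGroup M]
    [Module A M] [AddCommGroup T] [Module A T] [Fintype N] [Finite s] [Finite t] (u : N → T)
    (x : t → T) {q : (N → A) →ₗ[A] M} {σ : M →ₗ[A] (N → A)} (hσ : ∀ m, q (σ m) = m)
    (hu : ∀ m, ∑ i, σ m i • u i = 0) (E : (M × (s → A)) ≃ₗ[A] (t → A)) :
    ∃ f : N ⊕ s → T, (∀ i, u i ∈ Submodule.span A (Set.range f)) ∧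
      ∀ j, x j ∈ Submodule.span A (Set.range f) := by
  classical
  have := Fintype.ofFinite s
  have := Fintype.ofFinite t
  let Ψ : ((N → A) × (s → A)) →ₗ[A] T :=
    Fintype.linearCombination A u ∘ₗ LinearMap.fst A _ _ +
      Fintype.linearCombination A x ∘ₗ E.toLinearMap ∘ₗ q.prodMap LinearMap.id
  have hΨ (a : N → A) (b : s → A) : Ψ (a, b) =
      Fintype.linearCombination A u a + Fintype.linearCombination A x (E (q a, b)) := rfl
  have huσ (m : M) : Fintype.linearCombination A u (σ m) = 0 := hu m
  let Ψ' := Ψ ∘ₗ (LinearEquiv.sumArrowLequivProdArrow N s A A).toLinearMap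
  have hrange : Submodule.span A (Set.range fun k => Ψ' (Pi.single k 1)) = LinearMap.range Ψ' := by
    rw [← Function.comp_def Ψ', Set.range_comp, ← Submodule.map_span, ← Submodule.map_top]
    congr 1
    simpa only [funext (Pi.basisFun_apply A (N ⊕ s))] using (Pi.basisFun A (N ⊕ s)).span_eq
  have hmem (a : N → A) (b : s → A) : Ψ (a, b) ∈ LinearMap.range Ψ' :=
    ⟨(LinearEquiv.sumArrowLequivProdArrow N s A A).symm (a, b), by simp [Ψ']⟩
  refine ⟨fun k => Ψ' (Pi.single k 1), fun i => ?_, fun j => ?_⟩ <;> rw [hrange]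
  · have h := hmem (Pi.single i 1 - σ (q (Pi.single i 1))) 0
    rwa [hΨ, map_sub q, hσ, sub_self, ← Prod.zero_eq_mk, map_zero E, map_sub, huσ, map_zero,
      sub_zero, add_zero, Fintype.linearCombination_apply_single, one_smul] at h
  · have h := hmem (σ (E.symm (Pi.single j 1)).1) (E.symm (Pi.single j 1)).2
    rwa [hΨ, hσ, huσ, Prod.mk.eta, E.apply_symm_apply, zero_add,
      Fintype.linearCombination_apply_single, one_smul] at h

namespace PatchingData

variable {B A : Type*} [CommRing B] [CommRing A] [Algebra B A] {π : B} {κ s t : Type*} [Fintype κ]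
  {Y Z : κ → A}

theorem exists_algHom [Finite s] [Finite t] (D : PatchingData π Y Z) (hπ : IsSMulRegular B π)
    (hY : AlmostSurjective (Submonoid.powers π) ⊥ (aeval Y : MvPolynomial κ B →ₐ[B] A))
    (E : (Ω[A⁄B] × (s → A)) ≃ₗ[A] (t → A)) :
    ∃ F : MvPolynomial ((κ ⊕ κ) ⊕ s) A →ₐ[B] MvPolynomial t (MvPolynomial (κ ⊕ κ) B),
      (∀ a, C (D.ι a) ∈ F.range) ∧ (∀ x, C (D.discrepancy x) ∈ F.range) ∧
        ∀ j, X j ∈ F.range := by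
  let _ : Algebra A (MvPolynomial (κ ⊕ κ) B) := D.ι.toAlgebra
  have _ : IsScalarTower B A (MvPolynomial (κ ⊕ κ) B) := .of_algHom D.ι
  let q := Fintype.linearCombination A fun x => KaehlerDifferential.D B A (Sum.elim Z D.c x)
  have hq (ω : Ω[A⁄B]) : q (D.splitting ω) = ω :=
    linearCombination_liftKaehlerDifferential_retractDerivation D.aeval_ι ω
  obtain ⟨f, hf, hfX⟩ := exists_forall_mem_span_range
    (fun x => (C (D.discrepancy x) : MvPolynomial t (MvPolynomial (κ ⊕ κ) B))) X hq (fun ω => by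
      have h := D.sum_splitting_mul_discrepancy hπ hY ω
      calc ∑ x, D.splitting ω x • C (D.discrepancy x)
        _ = C (∑ x, D.ι (D.splitting ω x) * D.discrepancy x) := by
          rw [map_sum]
          exact Finset.sum_congr rfl fun x _ => smul_C _ _
        _ = 0 := by rw [h, C_0]) E
  let F := (aeval f : MvPolynomial ((κ ⊕ κ) ⊕ s) A →ₐ[A] _)
  have hspan {y} (hy : y ∈ Submodule.span A (Set.range f)) : y ∈ (F.restrictScalars B).range := by
    have h := Algebra.span_le_adjoin A _ hy
    rwa [Algebra.adjoin_range_eq_range_aeval] at h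
  exact ⟨F.restrictScalars B, fun a => ⟨C a, F.commutes a⟩, fun x => hspan (hf x),
    fun j => hspan (hfX j)⟩

variable {P : Type*} [CommRing P] [Algebra B P]
  {F : P →ₐ[B] MvPolynomial t (MvPolynomial (κ ⊕ κ) B)}

theorem C_X_inl_mem_range (D : PatchingData π Y Z) (hι : ∀ a, C (D.ι a) ∈ F.range)
    (hC : ∀ x, C (D.discrepancy x) ∈ F.range) (i : κ) : C (X (Sum.inl i)) ∈ F.range := by
  simpa [discrepancy] using add_mem (hC (Sum.inl i)) (hι (Z i))

theorem almostSurjective_span (D : PatchingData π Y Z) (hι : ∀ a, C (D.ι a) ∈ F.range)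
    (hC : ∀ x, C (D.discrepancy x) ∈ F.range) (hX : ∀ j, X j ∈ F.range) :
    AlmostSurjective ⊥ (Ideal.span {π}) F := by
  have hrange {y} (hy : y ∈ F.range) : y ∈ nearRange ⊥ (Ideal.span {π}) F := range_le_nearRange hy
  have htop : nearRange ⊥ (Ideal.span {π}) F = ⊤ := by
    refine eq_top_of_C_X_mem_of_X_mem _ ?_ fun j => hrange (hX j)
    rintro (i | j)
    · exact hrange (D.C_X_inl_mem_range hι hC i)
    · have hv : (C (X (Sum.inr j)) : MvPolynomial t _) =
          C (D.discrepancy (Sum.inr j)) + C (D.ι (D.c j)) - π • C (D.w j) := by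
        rw [smul_C, ← C_add, ← C_sub, discrepancy, Sum.elim_inr]
        congr 1
        ring
      rw [hv]
      exact sub_mem (add_mem (hrange (hC _)) (hrange (hι _)))
        (mem_nearRange_of_mem_map (mem_map_span_singleton_iff.2 ⟨_, rfl⟩))
  exact fun y => (Algebra.eq_top_iff.1 htop y :)

theorem almostSurjective_powers (D : PatchingData π Y Z) (hι : ∀ a, C (D.ι a) ∈ F.range)
    (hC : ∀ x, C (D.discrepancy x) ∈ F.range) (hX : ∀ j, X j ∈ F.range) :
    AlmostSurjective (Submonoid.powers π) ⊥ F := by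
  have hrange {y} (hy : y ∈ F.range) : y ∈ nearRange (Submonoid.powers π) ⊥ F :=
    range_le_nearRange hy
  have htop : nearRange (Submonoid.powers π) ⊥ F = ⊤ := by
    refine eq_top_of_C_X_mem_of_X_mem _ ?_ fun j => hrange (hX j)
    rintro (i | j)
    · exact hrange (D.C_X_inl_mem_range hι hC i)
    · let CF := IsScalarTower.toAlgHom B (MvPolynomial (κ ⊕ κ) B)
        (MvPolynomial t (MvPolynomial (κ ⊕ κ) B))
      have hg : C (rename Sum.inl (D.g j)) ∈ F.range := by
        have h : (aeval fun i => CF (X (Sum.inl i))).range ≤ F.range := by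
          rw [← Algebra.adjoin_range_eq_range_aeval, Algebra.adjoin_le_iff]
          rintro _ ⟨i, rfl⟩
          exact D.C_X_inl_mem_range hι hC i
        refine h ⟨D.g j, ?_⟩
        rw [← aeval_X_comp]
        exact (comp_aeval_apply _ CF _).symm
      obtain ⟨p, hp⟩ := sub_mem (hι (Y j)) hg
      refine ⟨π ^ D.e, ⟨D.e, rfl⟩, p, ?_⟩
      have hp : F p = π ^ D.e • C (X (Sum.inr j)) := by
        rw [smul_C, show F p = _ from hp, D.ι_Y, C_add, add_sub_cancel_left]
      rw [hp, sub_self]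
      exact zero_mem _
  exact fun y => (Algebra.eq_top_iff.1 htop y :)

theorem nonempty_algEquiv [IsNoetherianRing B] [Fintype s] [Fintype t] (D : PatchingData π Y Z)
    (hπB : IsSMulRegular B π) (hπA : IsSMulRegular A π)
    (hY : AlmostSurjective (Submonoid.powers π) ⊥ (aeval Y : MvPolynomial κ B →ₐ[B] A))
    (hZ : AlmostSurjective ⊥ (Ideal.span {π}) (aeval Z : MvPolynomial κ B →ₐ[B] A))
    (E : (Ω[A⁄B] × (s → A)) ≃ₗ[A] (t → A)) (hcard : Fintype.card t = Fintype.card (κ ⊕ s)) :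
    Nonempty (MvPolynomial ((κ ⊕ κ) ⊕ s) A ≃ₐ[B] MvPolynomial (t ⊕ (κ ⊕ κ)) B) := by
  obtain ⟨F, hι, hC, hX⟩ := D.exists_algHom hπB hY E
  let e := ((sumAlgEquiv B t (κ ⊕ κ)).symm.trans (renameEquiv B (Fintype.equivOfCardEq
    (by simp only [Fintype.card_sum, hcard]; ring) : t ⊕ (κ ⊕ κ) ≃ ((κ ⊕ κ) ⊕ s) ⊕ κ))).trans
      (sumAlgEquiv B ((κ ⊕ κ) ⊕ s) κ)
  have he (M : Submonoid B) (I : Ideal B) : AlmostSurjective M I e.toAlgHom :=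
    .of_surjective e.surjective
  have hF : Function.Bijective F := bijective_of_almostSurjective
    (isSMulRegular_mvPolynomial hπA) (isSMulRegular_mvPolynomial (isSMulRegular_mvPolynomial hπB))
    (D.almostSurjective_powers hι hC hX) (hY.mapAlgHom.comp (he _ _))
    (D.almostSurjective_span hι hC hX) (hZ.mapAlgHom.comp (he _ _))
  exact ⟨(AlgEquiv.ofBijective F hF).trans (sumAlgEquiv B _ _).symm⟩

end PatchingData

theorem exists_nonempty_algEquiv_of_isCoordinateSystem {B A : Type*} [CommRing B] [CommRing A]
    [Algebra B A] [IsNoetherianRing B] [Algebra.FiniteType B A] {π : B} (hπB : IsSMulRegular B π)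
    (hπA : IsSMulRegular A π) {l s : ℕ} {Y Z : Fin l → A}
    (hY : IsCoordinateSystem B B (Submonoid.powers π) ⊥ Y)
    (hZ : IsCoordinateSystem B B ⊥ (Ideal.span {π}) Z)
    (E : (Ω[A⁄B] × (Fin s → A)) ≃ₗ[A] (Fin (l + s) → A)) :
    ∃ r, Nonempty (MvPolynomial (Fin r) A ≃ₐ[B] MvPolynomial (Fin (l + r)) B) := by
  have hYinj : Function.Injective (aeval Y : MvPolynomial (Fin l) B →ₐ[B] A) :=
    (almostInjective_powers_bot_iff (isSMulRegular_mvPolynomial hπB)).1 hY.2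
  obtain ⟨D⟩ := PatchingData.nonempty hπB hπA hYinj hY.1 hZ.2 hZ.1
  obtain ⟨F⟩ := D.nonempty_algEquiv hπB hπA hY.1 hZ.1 E (by simp)
  let eA := (renameEquiv A (Fintype.equivOfCardEq (by simp) :
    Fin (l + l + s) ≃ (Fin l ⊕ Fin l) ⊕ Fin s)).restrictScalars B
  let eB := renameEquiv B (Fintype.equivOfCardEq (by simp; ring) :
    Fin (l + s) ⊕ (Fin l ⊕ Fin l) ≃ Fin (l + (l + l + s)))
  exact ⟨l + l + s, ⟨(eA.trans F).trans eB⟩⟩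

end

/-! ### Gluing coordinates from the minimal primes -/

section Almost

variable {R P Q : Type*} [CommRing R] [CommRing P] [CommRing Q] [Algebra R P] [Algebra R Q]
  {M : Submonoid R} {I : Ideal R} {d : R} {φ φ' : P →ₐ[R] Q}

theorem smul_mem_map_of_forall_mul_mem {J : Ideal R} (hd : ∀ r ∈ J, d * r ∈ I) {x : P}
    (hx : x ∈ J.map (algebraMap R P)) : d • x ∈ I.map (algebraMap R P) := by
  have hle : J.map (algebraMap R P) ≤ Submodule.comap
      (LinearMap.mulLeft P (algebraMap R P d)) (I.map (algebraMap R P)) :=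
    Ideal.map_le_iff_le_comap.2 fun r hr => by
      have h := Ideal.mem_map_of_mem (algebraMap R P) (hd r hr)
      rwa [map_mul] at h
  rw [Algebra.smul_def]
  exact hle hx

theorem AlmostSurjective.congr (hd : d ∈ M)
    (h : ∀ x, d • (φ x - φ' x) ∈ I.map (algebraMap R Q)) (hφ : AlmostSurjective M I φ) :
    AlmostSurjective M I φ' := by
  intro y
  obtain ⟨c, hc, x, hx⟩ := hφ y
  refine ⟨d * c, M.mul_mem hd hc, d • x, ?_⟩
  have hsub : (d * c) • y - φ' (d • x) = d • (c • y - φ x) + d • (φ x - φ' x) := by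
    rw [map_smul, mul_smul, ← smul_add, ← smul_sub, sub_add_sub_cancel]
  rw [hsub]
  exact add_mem (Submodule.smul_of_tower_mem _ d hx) (h x)

theorem AlmostInjective.congr (hd : d ∈ M)
    (h : ∀ x, d • (φ x - φ' x) ∈ I.map (algebraMap R Q)) (hφ : AlmostInjective M I φ) :
    AlmostInjective M I φ' := by
  intro x hx
  obtain ⟨c, hc, hcx⟩ := hφ (d • x) (by
    rw [map_smul, ← sub_add_cancel (φ x) (φ' x), smul_add]
    exact add_mem (h x) (Submodule.smul_of_tower_mem _ d hx))
  exact ⟨c * d, M.mul_mem hc hd, by rwa [mul_smul]⟩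

theorem AlmostInjective.comp {S : Type*} [CommRing S] [Algebra R S] {ψ : Q →ₐ[R] S}
    (hψ : AlmostInjective M I ψ) (hφ : AlmostInjective M I φ) :
    AlmostInjective M I (ψ.comp φ) := by
  intro x hx
  obtain ⟨c, hc, hcx⟩ := hψ _ hx
  obtain ⟨e, he, hex⟩ := hφ (c • x) (by rwa [map_smul])
  exact ⟨e * c, M.mul_mem he hc, by rwa [mul_smul]⟩

theorem exists_mem_powers_sum_smul_mem {V ι : Type*} [AddCommGroup V] [Module R V] [Fintype ι]
    {d : ι → R} (N : Submodule R V) {v : V} (h : ∀ i, ∃ c ∈ Submonoid.powers (d i), c • v ∈ N) :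
    ∃ c ∈ Submonoid.powers (∑ i, d i), c • v ∈ N := by
  let J : Ideal R := N.comap (LinearMap.toSpanSingleton R V v)
  have hsum : ∑ i, d i ∈ J.radical := sum_mem fun i _ => by
    obtain ⟨_, ⟨k, rfl⟩, hk⟩ := h i
    exact ⟨k, hk⟩
  obtain ⟨k, hk⟩ := hsum
  exact ⟨_, ⟨k, rfl⟩, hk⟩

theorem AlmostSurjective.powers_sum {ι : Type*} [Fintype ι] {d : ι → R}
    (h : ∀ i, AlmostSurjective (Submonoid.powers (d i)) I φ) :
    AlmostSurjective (Submonoid.powers (∑ i, d i)) I φ := by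
  have hmem {y : Q} : y ∈ nearRange ⊥ I φ ↔ ∃ x, y - φ x ∈ I.map (algebraMap R Q) :=
    ⟨fun ⟨_, hd, x, hx⟩ => ⟨x, by rwa [Submonoid.mem_bot.1 hd, one_smul] at hx⟩,
      fun ⟨x, hx⟩ => ⟨1, Submonoid.one_mem _, x, by rwa [one_smul]⟩⟩
  intro y
  obtain ⟨c, hc, hcy⟩ := exists_mem_powers_sum_smul_mem (nearRange ⊥ I φ).toSubmodule (v := y)
    fun i => (h i y).imp fun _ hx => hx.imp_right hmem.2
  exact ⟨c, hc, hmem.1 hcy⟩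

theorem AlmostInjective.powers_sum {ι : Type*} [Fintype ι] {d : ι → R}
    (h : ∀ i, AlmostInjective (Submonoid.powers (d i)) I φ) :
    AlmostInjective (Submonoid.powers (∑ i, d i)) I φ := fun x hx =>
  exists_mem_powers_sum_smul_mem ((I.map (algebraMap R P)).restrictScalars R) fun i => h i x hx

end Almost

section CoordinateSystem

variable {R B A : Type*} [CommRing R] [CommRing B] [CommRing A] [Algebra R B] [Algebra R A]
  [Algebra B A] [IsScalarTower R B A] {I : Ideal R} {σ : Type*}

theorem IsCoordinateSystem.smul [IsNoetherianRing B] [Finite σ] {M : Submonoid R} {d : R}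
    {Y : σ → A} (hd : d ∈ M) (h : IsCoordinateSystem R B M I Y) :
    IsCoordinateSystem R B M I (d • Y) := by
  let δ := ((aeval fun i => d • X i : MvPolynomial σ B →ₐ[B] MvPolynomial σ B)).restrictScalars R
  have hδ : AlmostSurjective M I δ := by
    have htop : nearRange M I δ = ⊤ := eq_top_of_C_mem_of_X_mem _
      (fun b => range_le_nearRange ⟨C b, aeval_C _ b⟩) fun i => ⟨d, hd, X i, by simp [δ]⟩
    exact fun y => (Algebra.eq_top_iff.1 htop y :)
  have hcomp : ((aeval Y : MvPolynomial σ B →ₐ[B] A).restrictScalars R).comp δ =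
      (aeval (d • Y) : MvPolynomial σ B →ₐ[B] A).restrictScalars R := by
    have : (aeval Y : MvPolynomial σ B →ₐ[B] A).comp (aeval fun i => d • X i) = aeval (d • Y) :=
      algHom_ext fun i => by
        rw [AlgHom.comp_apply, aeval_X, aeval_X, Pi.smul_apply, ← algebraMap_smul B d (X i),
          map_smul, aeval_X, algebraMap_smul]
    exact AlgHom.ext fun p => AlgHom.congr_fun this p
  rw [IsCoordinateSystem, ← hcomp]
  exact ⟨h.1.comp hδ, h.2.comp hδ.almostInjective_endomorphism⟩

theorem IsCoordinateSystem.congr {M : Submonoid R} {d : R} (hd : d ∈ M) {Y Z : σ → A}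
    (hYZ : ∀ i, d • (Y i - Z i) ∈ I.map (algebraMap R A)) (h : IsCoordinateSystem R B M I Y) :
    IsCoordinateSystem R B M I Z := by
  have hsub (p : MvPolynomial σ B) : d • (aeval Y p - aeval Z p) ∈ I.map (algebraMap R A) := by
    have hcomap {a : A} : a ∈ Submodule.comap (LinearMap.mulLeft A (algebraMap R A d))
        (I.map (algebraMap R A)) ↔ d • a ∈ I.map (algebraMap R A) := by
      rw [Submodule.mem_comap, LinearMap.mulLeft_apply, ← Algebra.smul_def]
    exact hcomap.1 (aeval_sub_aeval_mem (fun i => hcomap.2 (hYZ i)) p)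
  exact ⟨h.1.congr hd hsub, h.2.congr hd hsub⟩

theorem IsCoordinateSystem.sum [IsNoetherianRing B] [Finite σ] {ι : Type*} [Fintype ι] {d : ι → R}
    {Y : ι → σ → A} (hd : ∀ i j, i ≠ j → d i * d j ∈ I)
    (h : ∀ i, IsCoordinateSystem R B (Submonoid.powers (d i)) I (Y i)) :
    IsCoordinateSystem R B (Submonoid.powers (∑ i, d i)) I (∑ i, d i • Y i) := by
  classical
  have hi (i : ι) : IsCoordinateSystem R B (Submonoid.powers (d i)) I (∑ i, d i • Y i) := by
    refine ((h i).smul (Submonoid.mem_powers _)).congr (Submonoid.mem_powers _) fun x => ?_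
    rw [Finset.sum_apply, ← Finset.add_sum_erase _ _ (Finset.mem_univ i), sub_add_cancel_left,
      smul_neg, Finset.smul_sum]
    refine neg_mem (sum_mem fun j hj => ?_)
    rw [Pi.smul_apply, ← mul_smul]
    exact smul_mem_map_of_mem (hd i j (Finset.ne_of_mem_erase hj).symm) _
  exact ⟨.powers_sum fun i => (hi i).1, .powers_sum fun i => (hi i).2⟩

theorem IsCoordinateSystem.exists_powers [Module.Flat R B] [Algebra.FiniteType B A] {P : Ideal R}
    [P.IsPrime] {Y : σ → A} (h : IsCoordinateSystem R B P.primeCompl P Y) (hIP : I ≤ P) {d : R}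
    (hdP : ∀ r ∈ P, d * r ∈ I) :
    ∃ c ∉ P, IsCoordinateSystem R B (Submonoid.powers (d * c)) I Y := by
  obtain ⟨S, hS⟩ := ‹Algebra.FiniteType B A›.out
  let φ := (aeval Y : MvPolynomial σ B →ₐ[B] A)
  obtain ⟨c, hc, hcS⟩ := exists_mem_forall_finset P.primeCompl S
    (p := fun a c => ∃ p, c • a - φ p ∈ P.map (algebraMap R A))
    (by
      rintro a d c ⟨p, hp⟩
      refine ⟨c • p, ?_⟩
      rw [← AlgHom.restrictScalars_apply R φ, map_smul, mul_smul, ← smul_sub]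
      exact Submodule.smul_of_tower_mem _ c hp) fun a _ => h.1 a
  have _ : Module.Flat R (MvPolynomial σ B) := .trans R B _
  refine ⟨c, hc, ?_, fun p hp => ?_⟩
  · have hnear (a : A) (ha : a ∈ Algebra.adjoin B (S : Set A)) :
        a ∈ nearRange (Submonoid.powers (d * c)) I (φ.restrictScalars R) := by
      induction ha using Algebra.adjoin_induction with
      | mem a ha =>
        obtain ⟨p, hp⟩ := hcS a ha
        refine ⟨d * c, Submonoid.mem_powers _, d • p, ?_⟩
        rw [map_smul, mul_smul, ← smul_sub]
        exact smul_mem_map_of_forall_mul_mem hdP hp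
      | algebraMap b => exact range_le_nearRange ⟨C b, aeval_C _ b⟩
      | add x y _ _ hx hy => exact add_mem hx hy
      | mul x y _ _ hx hy => exact mul_mem hx hy
    exact fun a => hnear a (hS ▸ Algebra.mem_top)
  · obtain ⟨c', hc', h'⟩ := h.2 p (Ideal.map_mono hIP hp)
    have hp' := mem_map_of_smul_mem_map
      (fun r hr => (‹P.IsPrime›.mem_or_mem hr).resolve_left hc') h'
    refine ⟨d * c, Submonoid.mem_powers _, ?_⟩
    rw [mul_comm, mul_smul]
    exact Submodule.smul_of_tower_mem _ c (smul_mem_map_of_forall_mul_mem hdP hp')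

end CoordinateSystem

section MinimalPrimes

variable {R : Type*} [CommRing R] {I : Ideal R}

theorem mem_of_forall_mem_minimalPrimes (hI : I.IsRadical) {r : R}
    (h : ∀ P ∈ I.minimalPrimes, r ∈ P) : r ∈ I := by
  rw [← hI.radical, ← Ideal.sInf_minimalPrimes]
  exact Ideal.mem_sInf.2 fun {P} hP => h P hP

theorem exists_notMem_forall_mem_minimalPrimes [IsNoetherianRing R] {P : Ideal R}
    (hP : P ∈ I.minimalPrimes) : ∃ d ∉ P, ∀ Q ∈ I.minimalPrimes, Q ≠ P → d ∈ Q := by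
  have _ : P.IsPrime := hP.1.1
  have hfin := I.finite_minimalPrimes_of_isNoetherianRing R
  obtain ⟨d, hd, h⟩ := exists_mem_forall_finset P.primeCompl hfin.toFinset
    (p := fun Q d => Q ≠ P → d ∈ Q) (fun Q d c h hQ => Q.mul_mem_left _ (h hQ)) fun Q hQ => by
      have hQ := hfin.mem_toFinset.1 hQ
      by_cases hQP : Q = P
      · exact ⟨1, Submonoid.one_mem _, fun h => absurd hQP h⟩
      · obtain ⟨d, hd, hdP⟩ := SetLike.not_le_iff_exists.1
          fun hle : Q ≤ P => hQP (hle.antisymm (hP.2 hQ.1 hle))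
        exact ⟨d, hdP, fun _ => hd⟩
  exact ⟨d, hd, fun Q hQ => h Q (hfin.mem_toFinset.2 hQ)⟩

theorem exists_isCoordinateSystem_powers {B A : Type*} [CommRing B] [CommRing A] [Algebra R B]
    [Algebra R A] [Algebra B A] [IsScalarTower R B A] [IsNoetherianRing R] [IsNoetherianRing B]
    [Module.Flat R B] [Algebra.FiniteType B A] {σ : Type*} [Finite σ] (hI : I.IsRadical)
    (hfibre : ∀ (P : Ideal R) [P.IsPrime], ∃ Y : σ → A, IsCoordinateSystem R B P.primeCompl P Y) :
    ∃ π, (∀ r, π * r ∈ I → r ∈ I) ∧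
      ∃ Y : σ → A, IsCoordinateSystem R B (Submonoid.powers π) I Y := by
  classical
  let _ : Fintype I.minimalPrimes := (I.finite_minimalPrimes_of_isNoetherianRing R).fintype
  have hlocal (P : I.minimalPrimes) : ∃ (Y : σ → A) (d : R), d ∉ P.1 ∧
      (∀ Q ∈ I.minimalPrimes, Q ≠ P.1 → d ∈ Q) ∧
        IsCoordinateSystem R B (Submonoid.powers d) I Y := by
    have _ : P.1.IsPrime := P.2.1.1
    obtain ⟨Y, hY⟩ := hfibre P
    obtain ⟨d, hdP, hd⟩ := exists_notMem_forall_mem_minimalPrimes P.2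
    obtain ⟨c, hcP, hc⟩ := hY.exists_powers P.2.1.2 fun r hr =>
      mem_of_forall_mem_minimalPrimes hI fun Q hQ => by
        by_cases hQP : Q = P
        · exact hQP ▸ P.1.mul_mem_left _ hr
        · exact Q.mul_mem_right _ (hd Q hQ hQP)
    exact ⟨Y, d * c, P.1.primeCompl.mul_mem hdP hcP,
      fun Q hQ hQP => Q.mul_mem_right _ (hd Q hQ hQP), hc⟩
  choose Y d hdP hd hY using hlocal
  refine ⟨∑ P, d P, fun r hr => mem_of_forall_mem_minimalPrimes hI fun P hP => ?_, _,
    IsCoordinateSystem.sum (fun P Q hPQ => mem_of_forall_mem_minimalPrimes hI fun K hK => ?_) hY⟩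
  · refine (hP.1.1.mem_or_mem (hP.1.2 hr)).resolve_left fun hsum => hdP ⟨P, hP⟩ ?_
    rw [← Finset.add_sum_erase _ _ (Finset.mem_univ (⟨P, hP⟩ : I.minimalPrimes))] at hsum
    refine (Ideal.add_mem_iff_left _ (sum_mem fun Q hQ => hd Q P hP fun hPQ => ?_)).1 hsum
    exact Finset.ne_of_mem_erase hQ (Subtype.ext hPQ.symm)
  · by_cases hKP : K = P
    · exact K.mul_mem_left _ (hd Q K hK fun hKQ => hPQ (Subtype.ext (hKP.symm.trans hKQ)))
    · exact K.mul_mem_right _ (hd P K hK hKP)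

end MinimalPrimes

/-! ### Kähler differentials and coordinates -/

section LocalBasis

variable {A M : Type*} [CommRing A] [AddCommGroup M] [Module A M] {ι : Type*} {v : ι → M} {r : A}

theorem top_le_span_of_forall_smul_mem_span {S : Submonoid A} {A' M' : Type*} [CommRing A']
    [Algebra A A'] [IsLocalization S A'] [AddCommGroup M'] [Module A M'] [Module A' M']
    [IsScalarTower A A' M'] (f : M →ₗ[A] M') [IsLocalizedModule S f] (hr : r ∈ S)
    (hv : ∀ x, r • x ∈ Submodule.span A (Set.range v)) :
    ⊤ ≤ Submodule.span A' (Set.range (f ∘ v)) := by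
  rw [← span_eq_top_of_isLocalizedModule A' S f (v := Set.univ) (by simp), Submodule.span_le]
  rintro _ ⟨x, -, rfl⟩
  have hrx := Submodule.mem_map_of_mem (f := f) (hv x)
  rw [Submodule.map_span, ← Set.range_comp] at hrx
  have hrx' := Submodule.span_subset_span A A' _ hrx
  rw [map_smul, ← algebraMap_smul A' r] at hrx'
  exact (Submodule.smul_mem_iff_of_isUnit _ (IsLocalization.map_units A' (⟨r, hr⟩ : S))).1 hrx'

variable [Fintype ι] [IsDomain A]

theorem linearIndependent_of_forall_smul_mem_span (hr : r ≠ 0)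
    (hv : ∀ x, r • x ∈ Submodule.span A (Set.range v))
    (hM : Module.finrank A M = Fintype.card ι) : LinearIndependent A v := by
  let f := LocalizedModule.mkLinearMap (nonZeroDivisors A) M
  have hrank : Fintype.card ι =
      Module.finrank (FractionRing A) (LocalizedModule (nonZeroDivisors A) M) := by
    rw [IsFractionRing.finrank_right_eq A, IsLocalizedModule.finrank_eq _ f le_rfl, hM]
  have hli := linearIndependent_of_top_le_span_of_card_eq_finrank
    (top_le_span_of_forall_smul_mem_span (A' := FractionRing A) f
      (mem_nonZeroDivisors_of_ne_zero hr) hv) hrank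
  exact (hli.restrict_scalars' A).of_comp f

theorem projective_of_forall_isMaximal_smul_mem_span [Module.FinitePresentation A M]
    (hv : ∀ (q : Ideal A) [q.IsMaximal], ∃ v : ι → M, ∃ r ∉ q,
      ∀ x, r • x ∈ Submodule.span A (Set.range v))
    (hM : Module.finrank A M = Fintype.card ι) : Module.Projective A M := by
  refine Module.projective_of_localization_maximal fun q hq => ?_
  obtain ⟨v, r, hr, hrv⟩ := hv q
  have hr0 : r ≠ 0 := fun h => hr (h ▸ q.zero_mem)
  let f := LocalizedModule.mkLinearMap q.primeCompl M
  have hli := (linearIndependent_of_forall_smul_mem_span hr0 hrv hM).of_isLocalizedModule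
    (Localization.AtPrime q) q.primeCompl f
  exact .of_basis
    (Module.Basis.mk hli (top_le_span_of_forall_smul_mem_span (S := q.primeCompl) f hr hrv))

end LocalBasis

theorem exists_linearEquiv_of_isStablyFree {A M : Type*} [CommRing A] [IsDomain A] [AddCommGroup M]
    [Module A M] [Module.Finite A M] (h : IsStablyFree A M) :
    ∃ s, Nonempty ((M × (Fin s → A)) ≃ₗ[A] (Fin (Module.finrank A M + s) → A)) := by
  obtain ⟨s, t, ⟨e⟩⟩ := h
  have hrank := Submodule.finrank_quotient_add_finrank
    (LinearMap.ker (LinearMap.snd A M (Fin s → A)))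
  rw [((LinearMap.snd A M (Fin s → A)).quotKerEquivOfSurjective Prod.snd_surjective).finrank_eq,
    Module.finrank_fin_fun, LinearMap.ker_snd,
    LinearMap.finrank_range_of_inj LinearMap.inl_injective, e.finrank_eq, Module.finrank_fin_fun,
    add_comm] at hrank
  exact ⟨s, ⟨e.trans (LinearEquiv.funCongrLeft A A (finCongr hrank))⟩⟩

section Differentials

open KaehlerDifferential

variable {R B A : Type*} [CommRing R] [CommRing B] [CommRing A] [Algebra R B] [Algebra R A]
  [Algebra B A] [IsScalarTower R B A] {σ : Type*} {Y : σ → A}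

variable (B) in
theorem D_mem_smul_top {q : Ideal A} {a : A}
    (ha : a ∈ (q.comap (algebraMap R A)).map (algebraMap R A)) :
    D B A a ∈ (q • ⊤ : Submodule A Ω[A⁄B]) := by
  induction ha using Submodule.span_induction with
  | mem _ h =>
    obtain ⟨x, -, rfl⟩ := h
    rw [IsScalarTower.algebraMap_apply R B A, Derivation.map_algebraMap]
    exact zero_mem _
  | zero => simp
  | add x y _ _ hx hy => rw [map_add]; exact add_mem hx hy
  | smul b x hx hDx =>
    rw [smul_eq_mul, Derivation.leibniz]
    exact add_mem (Submodule.smul_mem _ _ hDx)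
      (Submodule.smul_mem_smul (Ideal.map_comap_le hx) trivial)

theorem D_mem_span_sup_smul_top [Finite σ] {q : Ideal A} [hq : q.IsMaximal]
    (hY : AlmostSurjective (q.comap (algebraMap R A)).primeCompl (q.comap (algebraMap R A))
      ((aeval Y : MvPolynomial σ B →ₐ[B] A).restrictScalars R)) (a : A) :
    D B A a ∈ Submodule.span A (Set.range fun i => D B A (Y i)) ⊔ q • ⊤ := by
  set N := Submodule.span A (Set.range fun i => D B A (Y i))
  have := Fintype.ofFinite σ
  obtain ⟨d, hd, p, hp⟩ := hY a
  have hDp : D B A (aeval Y p) ∈ N := by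
    rw [derivation_aeval]
    exact sum_mem fun i _ => Submodule.smul_mem _ _ (Submodule.subset_span ⟨i, rfl⟩)
  have hda : algebraMap R A d • D B A a ∈ N ⊔ q • ⊤ := by
    have hDd : D B A (d • a) = algebraMap R A d • D B A a := by
      rw [algebraMap_smul]
      exact ((D B A).restrictScalars R).map_smul d a
    rw [← hDd, ← sub_add_cancel (d • a) (aeval Y p), map_add]
    exact add_mem (Submodule.mem_sup_right (D_mem_smul_top B hp)) (Submodule.mem_sup_left hDp)
  obtain ⟨e, i, hi, he⟩ := hq.exists_inv (x := algebraMap R A d) hd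
  rw [← one_smul A (D B A a), ← he, add_smul, mul_smul]
  exact add_mem (Submodule.smul_mem _ _ hda)
    (Submodule.mem_sup_right (Submodule.smul_mem_smul hi trivial))

theorem exists_notMem_smul_mem_span_D [Finite σ] [Algebra.FiniteType B A] {q : Ideal A}
    [hq : q.IsMaximal]
    (hY : AlmostSurjective (q.comap (algebraMap R A)).primeCompl (q.comap (algebraMap R A))
      ((aeval Y : MvPolynomial σ B →ₐ[B] A).restrictScalars R)) :
    ∃ r ∉ q, ∀ x : Ω[A⁄B], r • x ∈ Submodule.span A (Set.range fun i => D B A (Y i)) := by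
  set N := Submodule.span A (Set.range fun i => D B A (Y i))
  have htop : (⊤ : Submodule A Ω[A⁄B]) ≤ N ⊔ q • ⊤ := by
    refine (span_range_derivation B A).ge.trans (Submodule.span_le.2 ?_)
    rintro _ ⟨a, rfl⟩
    exact D_mem_span_sup_smul_top hY a
  have hquot : (⊤ : Submodule A (Ω[A⁄B] ⧸ N)) ≤ q • ⊤ := by
    have := Submodule.map_mono (f := N.mkQ) htop
    rw [Submodule.map_sup, Submodule.map_smul''] at this
    simpa [Submodule.range_mkQ] using this
  obtain ⟨r, hr, hrN⟩ := Submodule.exists_sub_one_mem_and_smul_eq_zero_of_fg_of_le_smul q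
    (⊤ : Submodule A (Ω[A⁄B] ⧸ N)) Module.Finite.fg_top hquot
  refine ⟨r, fun hrq => hq.ne_top ((Ideal.eq_top_iff_one q).2 ?_), fun x => ?_⟩
  · simpa using q.sub_mem hrq hr
  · rw [← Submodule.Quotient.mk_eq_zero, Submodule.Quotient.mk_smul]
    exact hrN _ trivial

theorem isFractionRing_of_forall_smul_mem_range {S A L : Type*} [CommRing S] [CommRing A]
    [IsDomain A] [Field L] [Algebra S A] [FaithfulSMul S A] [Algebra A L] [Algebra S L]
    [IsScalarTower S A L] [IsFractionRing A L]
    (h : ∀ a : A, ∃ d : S, d ≠ 0 ∧ ∃ p : S, d • a = algebraMap S A p) : IsFractionRing S L := by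
  have hSL : Function.Injective (algebraMap S L) := by
    rw [IsScalarTower.algebraMap_eq S A L]
    exact (IsFractionRing.injective A L).comp (FaithfulSMul.algebraMap_injective S A)
  have : FaithfulSMul S L := (faithfulSMul_iff_algebraMap_injective S L).2 hSL
  have hfrac : ∀ a : A, ∃ d p : S,
      algebraMap A L a = algebraMap S L p / algebraMap S L d := fun a => by
    obtain ⟨d, hd, p, hp⟩ := h a
    have hdL : algebraMap S L d ≠ 0 := (map_ne_zero_iff _ hSL).2 hd
    refine ⟨d, p, (eq_div_iff hdL).2 ?_⟩
    rw [IsScalarTower.algebraMap_apply S A L p, ← hp, Algebra.smul_def, map_mul, mul_comm,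
      ← IsScalarTower.algebraMap_apply]
  refine IsFractionRing.of_field S L fun z => ?_
  obtain ⟨a, b, -, rfl⟩ := IsFractionRing.div_surjective (A := A) z
  obtain ⟨d, p, ha⟩ := hfrac a
  obtain ⟨e, q, hb⟩ := hfrac b
  exact ⟨p * e, d * q, by rw [ha, hb, div_div_div_eq, map_mul, map_mul]⟩

section Rank

variable [IsDomain R] [Module.IsTorsionFree R B] {M : Submonoid R}

theorem IsCoordinateSystem.aeval_injective (hM : (0 : R) ∉ M)
    (hY : IsCoordinateSystem R B M ⊥ Y) :
    Function.Injective (aeval Y : MvPolynomial σ B →ₐ[B] A) := by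
  rw [injective_iff_map_eq_zero]
  intro p hp
  obtain ⟨d, hd, hdp⟩ := hY.2 p (by simp [hp])
  rw [Ideal.map_bot, Ideal.mem_bot, smul_eq_zero] at hdp
  exact hdp.resolve_left fun h => hM (h ▸ hd)

theorem finrank_kaehlerDifferential [Fintype σ] [IsDomain A] [Module.IsTorsionFree R A]
    (hM : (0 : R) ∉ M)
    (hY : IsCoordinateSystem R B M ⊥ Y) :
    Module.finrank A Ω[A⁄B] = Fintype.card σ := by
  let S := MvPolynomial σ B
  let L := FractionRing A
  let : Algebra S A := (aeval Y : S →ₐ[B] A).toRingHom.toAlgebra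
  have : IsScalarTower B S A :=
    .of_algebraMap_eq fun b => ((aeval Y : S →ₐ[B] A).commutes b).symm
  have : IsScalarTower R S A := .of_algebraMap_eq fun r => by
    rw [IsScalarTower.algebraMap_apply R B S, ← IsScalarTower.algebraMap_apply B S A,
      ← IsScalarTower.algebraMap_apply R B A]
  have : IsScalarTower B S L := .to₁₂₄ B S A L
  have : FaithfulSMul S A :=
    (faithfulSMul_iff_algebraMap_injective S A).2 (hY.aeval_injective hM)
  have : IsFractionRing S L := isFractionRing_of_forall_smul_mem_range fun a => by
    obtain ⟨d, hd, p, hp⟩ := hY.1 a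
    have hd0 : d ≠ 0 := fun h => hM (h ▸ hd)
    rw [Ideal.map_bot, Ideal.mem_bot, sub_eq_zero] at hp
    refine ⟨algebraMap R S d, ?_, p, (algebraMap_smul S d a).trans hp⟩
    rw [ne_eq, ← (FaithfulSMul.algebraMap_injective S A).eq_iff, map_zero,
      ← IsScalarTower.algebraMap_apply, Algebra.algebraMap_eq_smul_one, smul_eq_zero]
    exact fun h => h.elim hd0 one_ne_zero
  have : Nontrivial S := (algebraMap S A).domain_nontrivial
  have hA := IsLocalizedModule.finrank_eq (nonZeroDivisors A) (map B B A L) le_rfl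
  have hS := IsLocalizedModule.finrank_eq (nonZeroDivisors S) (map B B S L) le_rfl
  rw [← hA, ← IsFractionRing.finrank_right_eq A L, IsFractionRing.finrank_right_eq S L, hS,
    Module.finrank_eq_card_basis (mvPolynomialBasis B σ)]

theorem projective_kaehlerDifferential [Finite σ] [IsDomain A] [Module.IsTorsionFree R A]
    [IsNoetherianRing A] [Algebra.FiniteType B A]
    (hfibre : ∀ (P : Ideal R) [P.IsPrime], ∃ Y : σ → A, IsCoordinateSystem R B P.primeCompl P Y) :
    Module.Projective A Ω[A⁄B] := by
  have := Fintype.ofFinite σ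
  obtain ⟨Y₀, hY₀⟩ := hfibre ⊥
  have : Module.FinitePresentation A Ω[A⁄B] := Module.finitePresentation_of_finite A _
  refine projective_of_forall_isMaximal_smul_mem_span (fun q _ => ?_)
    (finrank_kaehlerDifferential (not_not_intro rfl) hY₀)
  obtain ⟨Y, hY⟩ := hfibre (q.comap (algebraMap R A))
  exact ⟨_, exists_notMem_smul_mem_span_D hY.1⟩

end Rank

theorem exists_linearEquiv_kaehlerDifferential [IsDomain R] [IsDomain A] [Module.IsTorsionFree R B]
    [Module.IsTorsionFree R A] [IsNoetherianRing A] [Algebra.FiniteType B A]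
    (hA : FreelyResolvable A) {l : ℕ}
    (hfibre : ∀ (P : Ideal R) [P.IsPrime],
      ∃ Y : Fin l → A, IsCoordinateSystem R B P.primeCompl P Y) :
    ∃ s, Nonempty ((Ω[A⁄B] × (Fin s → A)) ≃ₗ[A] (Fin (l + s) → A)) := by
  have := projective_kaehlerDifferential hfibre
  obtain ⟨n, hn⟩ := hA.hasFiniteFreeResolution Ω[A⁄B]
  obtain ⟨Y, hY⟩ := hfibre ⊥
  have hrank := finrank_kaehlerDifferential (not_not_intro rfl) hY
  rw [Fintype.card_fin] at hrank
  exact hrank ▸ exists_linearEquiv_of_isStablyFree hn.isStablyFree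

end Differentials

/-! ### Patching modulo an ideal -/

theorem exists_linearEquiv_kaehlerDifferential_of_isPushout {B A B' A' : Type*} [CommRing B]
    [CommRing A] [CommRing B'] [CommRing A'] [Algebra B A] [Algebra B B'] [Algebra A A']
    [Algebra B A'] [Algebra B' A'] [IsScalarTower B B' A'] [IsScalarTower B A A']
    [Algebra.IsPushout B B' A A'] {s t : ℕ} (E : (Ω[A⁄B] × (Fin s → A)) ≃ₗ[A] (Fin t → A)) :
    Nonempty ((Ω[A'⁄B'] × (Fin s → A')) ≃ₗ[A'] (Fin t → A')) :=
  ⟨((KaehlerDifferential.tensorKaehlerEquiv B B' A A').symm.prodCongr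
      (TensorProduct.piScalarRight A A' A' (Fin s)).symm).trans <|
    (TensorProduct.prodRight A A' A' Ω[A⁄B] (Fin s → A)).symm.trans <|
      (E.baseChange A A' _ _).trans (TensorProduct.piScalarRight A A' A' (Fin t))⟩

section Quotient

variable {R S S' : Type*} [CommRing R] [CommRing S] [CommRing S'] [Algebra R S] [Algebra R S']
  {I : Ideal R} {f : S →ₐ[R] S'}

theorem isSMulRegular_of_surjective [Module.Flat R S] {π : R}
    (hπ : ∀ r, π * r ∈ I → r ∈ I) (hf : Function.Surjective f)
    (hker : RingHom.ker f = I.map (algebraMap R S)) :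
    IsSMulRegular S' π := by
  rw [isSMulRegular_iff_right_eq_zero_of_smul]
  intro x hx
  obtain ⟨s, rfl⟩ := hf x
  rw [← map_smul, ← RingHom.mem_ker, hker] at hx
  exact RingHom.mem_ker.1 (hker ▸ mem_map_of_smul_mem_map hπ hx)

theorem map_algebraMap_eq_bot_of_ker_eq (hker : RingHom.ker f = I.map (algebraMap R S)) :
    I.map (algebraMap R S') = ⊥ := by
  rw [← f.comp_algebraMap, ← Ideal.map_map, ← hker]
  exact (Ideal.map_eq_bot_iff_le_ker _).2 le_rfl

end Quotient

theorem exists_isCoordinateSystem_of_isPushout {R B A B' A' : Type*} [CommRing R] [CommRing B]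
    [CommRing A] [CommRing B'] [CommRing A'] [Algebra R B] [Algebra R A] [Algebra R B']
    [Algebra R A'] [Algebra B A] [Algebra B B'] [Algebra A A'] [Algebra B A'] [Algebra B' A']
    [IsScalarTower R B A] [IsScalarTower R B' A'] [IsScalarTower R B B'] [IsScalarTower R A A']
    [IsScalarTower B B' A'] [IsScalarTower B A A'] [Algebra.IsPushout B B' A A']
    [IsNoetherianRing B] [Algebra.FiniteType B A] [Module.Flat R B] [Module.Flat R A] {I : Ideal R}
    {π : R} (hπ : ∀ r, π * r ∈ I → r ∈ I) (hB : Function.Surjective (algebraMap B B'))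
    (hA : Function.Surjective (algebraMap A A'))
    (hkerB : RingHom.ker (IsScalarTower.toAlgHom R B B') = I.map (algebraMap R B))
    (hkerA : RingHom.ker (IsScalarTower.toAlgHom R A A') = I.map (algebraMap R A))
    {l s : ℕ} {Y Z : Fin l → A} (hY : IsCoordinateSystem R B (Submonoid.powers π) I Y)
    (hZ : IsCoordinateSystem R B ⊥ (I ⊔ Ideal.span {π}) Z)
    (E : (Ω[A⁄B] × (Fin s → A)) ≃ₗ[A] (Fin (l + s) → A)) :
    ∃ r, ∃ Y : Fin (l + r) → MvPolynomial (Fin r) A, IsCoordinateSystem R B ⊥ I Y := by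
  have hBA : ∀ b, IsScalarTower.toAlgHom R A A' (algebraMap B A b) =
      algebraMap B' A' (IsScalarTower.toAlgHom R B B' b) := fun b => by
    simp [← IsScalarTower.algebraMap_apply]
  have : IsNoetherianRing B' := isNoetherianRing_of_surjective B B' _ hB
  have : Algebra.FiniteType B A' := .of_surjective (IsScalarTower.toAlgHom B A A') hA
  have : Algebra.FiniteType B' A' := .of_restrictScalars_finiteType B B' A'
  obtain ⟨E'⟩ := exists_linearEquiv_kaehlerDifferential_of_isPushout (B' := B') (A' := A') E
  rw [← isCoordinateSystem_map_iff hBA hB hA hkerB.le hkerA.le, ← isCoordinateSystem_self_iff,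
    Submonoid.map_powers, map_algebraMap_eq_bot_of_ker_eq hkerB] at hY
  rw [← isCoordinateSystem_map_iff hBA hB hA (hkerB.le.trans (Ideal.map_mono le_sup_left))
    (hkerA.le.trans (Ideal.map_mono le_sup_left)), ← isCoordinateSystem_self_iff, Submonoid.map_bot,
    Ideal.map_sup, map_algebraMap_eq_bot_of_ker_eq hkerB, bot_sup_eq, Ideal.map_span,
    Set.image_singleton] at hZ
  have hπB' : IsSMulRegular B' (algebraMap R B' π) :=
    (isSMulRegular_algebraMap_iff _).2 (isSMulRegular_of_surjective hπ hB hkerB)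
  have hπA' : IsSMulRegular A' (algebraMap R B' π) :=
    (isSMulRegular_algebraMap_iff _).2 (isSMulRegular_of_surjective hπ hA hkerA)
  obtain ⟨r, ⟨e⟩⟩ := exists_nonempty_algEquiv_of_isCoordinateSystem hπB' hπA' hY hZ E'
  have hlift : Function.Surjective (mapAlgHom (IsScalarTower.toAlgHom R A A') :
      MvPolynomial (Fin r) A →ₐ[R] MvPolynomial (Fin r) A') := map_surjective _ hA
  choose Y' hY' using fun i => hlift (e.symm (X i))
  refine ⟨r, Y', (isCoordinateSystem_map_iff (fun b => ?_) hB hlift hkerB.le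
    (ker_mapAlgHom_le hkerA.le)).1 ?_⟩
  · rw [MvPolynomial.algebraMap_apply, mapAlgHom_apply, map_C]
    exact congrArg C (hBA b)
  · convert isCoordinateSystem_of_algEquiv (R := R) e.symm using 1
    exact funext hY'

theorem ker_includeRight_quotient {B A : Type*} [CommRing B] [CommRing A] [Algebra B A]
    (J : Ideal B) :
    RingHom.ker (Algebra.TensorProduct.includeRight : A →ₐ[B] (B ⧸ J) ⊗[B] A) =
      J.map (algebraMap B A) := by
  ext a
  rw [RingHom.mem_ker, Algebra.TensorProduct.includeRight_apply,
    ← Algebra.TensorProduct.quotIdealMapEquivQuotTensor_mk,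
    map_eq_zero_iff _ (AlgEquiv.injective _), Ideal.Quotient.eq_zero_iff_mem]

theorem exists_isCoordinateSystem_of_powers {R B A : Type*} [CommRing R] [CommRing B] [CommRing A]
    [Algebra R B] [Algebra R A] [Algebra B A] [IsScalarTower R B A] [IsNoetherianRing B]
    [Algebra.FiniteType B A] [Module.Flat R B] [Module.Flat R A] {I : Ideal R} {π : R}
    (hπ : ∀ r, π * r ∈ I → r ∈ I) {l s : ℕ} {Y Z : Fin l → A}
    (hY : IsCoordinateSystem R B (Submonoid.powers π) I Y)
    (hZ : IsCoordinateSystem R B ⊥ (I ⊔ Ideal.span {π}) Z)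
    (E : (Ω[A⁄B] × (Fin s → A)) ≃ₗ[A] (Fin (l + s) → A)) :
    ∃ r, ∃ Y : Fin (l + r) → MvPolynomial (Fin r) A, IsCoordinateSystem R B ⊥ I Y := by
  let J := I.map (algebraMap R B)
  let : Algebra A ((B ⧸ J) ⊗[B] A) := Algebra.TensorProduct.rightAlgebra
  have : IsScalarTower R A ((B ⧸ J) ⊗[B] A) := .to₁₃₄ R B A _
  refine exists_isCoordinateSystem_of_isPushout (B' := B ⧸ J) (A' := (B ⧸ J) ⊗[B] A) hπ
    Ideal.Quotient.mk_surjective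
    (Algebra.TensorProduct.includeRight_surjective A Ideal.Quotient.mk_surjective) ?_ ?_ hY hZ E
  · exact Ideal.mk_ker
  · refine (ker_includeRight_quotient J).trans ?_
    rw [Ideal.map_map, ← IsScalarTower.algebraMap_eq]

/-! ### Coordinates of the fibres -/

section Almost

variable {R P Q S : Type*} [CommRing R] [CommRing P] [CommRing Q] [CommRing S] [Algebra R P]
  [Algebra R Q] [Algebra R S] {M : Submonoid R} {I : Ideal R} {φ : P →ₐ[R] Q} {ψ : Q →ₐ[R] S}

theorem AlmostSurjective.of_comp_left (h : AlmostSurjective M I (ψ.comp φ))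
    (hψ : AlmostInjective M I ψ) : AlmostSurjective M I φ := by
  intro y
  obtain ⟨d, hd, x, hx⟩ := h (ψ y)
  rw [AlgHom.comp_apply, ← map_smul, ← map_sub] at hx
  obtain ⟨c, hc, hcx⟩ := hψ _ hx
  exact ⟨c * d, M.mul_mem hc hd, c • x, by rwa [map_smul, mul_smul, ← smul_sub]⟩

theorem AlmostInjective.of_comp (h : AlmostInjective M I (ψ.comp φ)) : AlmostInjective M I φ :=
  fun x hx => h x (map_mem_map ψ hx)

end Almost

section Fibre

variable {R B A : Type*} [CommRing R] [CommRing B] [CommRing A] [Algebra R B] [Algebra R A]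
  [Algebra B A] [IsScalarTower R B A] {σ : Type*}

theorem IsCoordinateSystem.exists_of_almostBijective {B' A' : Type*} [CommRing B'] [CommRing A']
    [Algebra R B'] [Algebra R A'] [Algebra B' A'] [IsScalarTower R B' A'] [IsNoetherianRing B']
    [Finite σ] {M : Submonoid R} {I : Ideal R} {f : B →ₐ[R] B'} {g : A →ₐ[R] A'}
    (hfg : ∀ b, g (algebraMap B A b) = algebraMap B' A' (f b)) (hf : AlmostSurjective M I f)
    (hf' : AlmostInjective M I f) (hg : AlmostSurjective M I g) (hg' : AlmostInjective M I g)
    {Y' : σ → A'} (h : IsCoordinateSystem R B' M I Y') :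
    ∃ Y : σ → A, IsCoordinateSystem R B M I Y := by
  have _ := Fintype.ofFinite σ
  obtain ⟨d, hd, hY⟩ := exists_mem_forall_finset M (Finset.univ : Finset σ)
    (p := fun i d => ∃ y, d • Y' i - g y ∈ I.map (algebraMap R A'))
    (by
      rintro i d c ⟨y, hy⟩
      refine ⟨c • y, ?_⟩
      rw [map_smul, mul_smul, ← smul_sub]
      exact Submodule.smul_of_tower_mem _ c hy) fun i _ => hg (Y' i)
  choose Y hY using fun i => hY i (Finset.mem_univ i)
  have hgY : IsCoordinateSystem R B' M I (g ∘ Y) :=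
    (h.smul hd).congr M.one_mem fun i => by rw [one_smul]; exact hY i
  have hcomp : ((aeval (g ∘ Y) : MvPolynomial σ B' →ₐ[B'] A').restrictScalars R).comp
      (mapAlgHom f) = g.comp ((aeval Y : MvPolynomial σ B →ₐ[B] A).restrictScalars R) := by
    refine AlgHom.ext fun p => ?_
    induction p using MvPolynomial.induction_on with
    | C b => simp [hfg]
    | add p q hp hq => rw [map_add, hp, hq, map_add]
    | mul_X p i hp =>
      rw [map_mul, hp, map_mul]
      simp
  exact ⟨Y, (hcomp ▸ hgY.1.comp hf.mapAlgHom).of_comp_left hg',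
    (hcomp ▸ hgY.2.comp hf'.mapAlgHom).of_comp⟩

variable (P : Ideal R) [P.IsPrime]

theorem map_residueField_tensorProduct_eq_bot :
    P.map (algebraMap R (P.ResidueField ⊗[R] A)) = ⊥ := by
  refine (Ideal.map_eq_bot_iff_le_ker _).2 fun r hr => ?_
  rw [RingHom.mem_ker, IsScalarTower.algebraMap_apply R P.ResidueField,
    Ideal.algebraMap_residueField_eq_zero.2 hr, map_zero]

theorem almostSurjective_includeRight_residueField : AlmostSurjective P.primeCompl P
    (Algebra.TensorProduct.includeRight : A →ₐ[R] P.ResidueField ⊗[R] A) := by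
  intro z
  obtain ⟨d, hd, a, ha⟩ := Ideal.Fiber.exists_smul_eq_one_tmul P z
  refine ⟨d, hd, a, ?_⟩
  rw [ha, Algebra.TensorProduct.includeRight_apply, sub_self]
  exact zero_mem _

theorem almostInjective_includeRight_residueField : AlmostInjective P.primeCompl P
    (Algebra.TensorProduct.includeRight : A →ₐ[R] P.ResidueField ⊗[R] A) := by
  intro a ha
  rw [map_residueField_tensorProduct_eq_bot, Ideal.mem_bot] at ha
  obtain ⟨d, hd, hda⟩ := exists_notMem_smul_mem_of_one_tmul_eq_zero P ha
  exact ⟨d, hd, (mem_smul_top_iff_mem_map _ _).1 hda⟩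

theorem exists_isCoordinateSystem_of_fibersPolynomialOver [Algebra.FiniteType R B] {l : ℕ}
    (h : FibersPolynomialOver R B A l) :
    ∃ Y : Fin l → A, IsCoordinateSystem R B P.primeCompl P Y := by
  let B' := P.ResidueField ⊗[R] B
  let A' := P.ResidueField ⊗[R] A
  let F : B' →ₐ[R] A' := Algebra.TensorProduct.map (AlgHom.id R P.ResidueField)
    (IsScalarTower.toAlgHom R B A)
  let : Algebra B' A' := F.toRingHom.toAlgebra
  have : IsScalarTower R B' A' := .of_algebraMap_eq fun r => (F.commutes r).symm
  have : IsNoetherianRing B' := Algebra.FiniteType.isNoetherianRing P.ResidueField B'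
  obtain ⟨Φ⟩ : Nonempty (A' ≃ₐ[B'] MvPolynomial (Fin l) B') := h P ‹_›
  refine (isCoordinateSystem_of_algEquiv Φ.symm).exists_of_almostBijective (fun b => ?_)
    (almostSurjective_includeRight_residueField P) (almostInjective_includeRight_residueField P)
    (almostSurjective_includeRight_residueField P) (almostInjective_includeRight_residueField P)
  exact (Algebra.TensorProduct.map_tmul (AlgHom.id R P.ResidueField)
    (IsScalarTower.toAlgHom R B A) 1 b).symm

end Fibre

/-! ### Noetherian induction -/

section Induction

variable {R B A : Type*} [CommRing R] [CommRing B] [CommRing A] [Algebra R B] [Algebra R A]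
  [Algebra B A] [IsScalarTower R B A]

theorem isCoordinateSystem_top {M : Submonoid R} {σ : Type*} {Y : σ → A} :
    IsCoordinateSystem R B M ⊤ Y := by
  refine ⟨fun _ => ⟨1, M.one_mem, 0, ?_⟩, fun _ _ => ⟨1, M.one_mem, ?_⟩⟩
  all_goals
    rw [Ideal.map_top]
    exact Submodule.mem_top

theorem IsCoordinateSystem.mvPolynomial_fin {M : Submonoid R} {I : Ideal R} {l : ℕ} {Y : Fin l → A}
    (h : IsCoordinateSystem R B M I Y) (r : ℕ) :
    ∃ Z : Fin (l + r) → MvPolynomial (Fin r) A, IsCoordinateSystem R B M I Z :=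
  ⟨_, h.mvPolynomial.comp_equiv (finSumFinEquiv.trans (finCongr (add_comm r l))).symm⟩

theorem IsCoordinateSystem.mvPolynomial_add {M : Submonoid R} {I : Ideal R} {l r s : ℕ}
    {Y : Fin (l + r + s) → MvPolynomial (Fin s) (MvPolynomial (Fin r) A)}
    (h : IsCoordinateSystem R B M I Y) :
    ∃ Z : Fin (l + (s + r)) → MvPolynomial (Fin (s + r)) A, IsCoordinateSystem R B M I Z := by
  let e : MvPolynomial (Fin s) (MvPolynomial (Fin r) A) ≃ₐ[A] MvPolynomial (Fin (s + r)) A :=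
    (sumAlgEquiv A (Fin s) (Fin r)).symm.trans (renameEquiv A finSumFinEquiv)
  exact ⟨_, (h.map_algEquiv (e.restrictScalars B)).comp_equiv (finCongr (by omega))⟩

variable [IsNoetherianRing R] [IsDomain R] [IsNoetherianRing B] [IsDomain A]
  [Module.Flat R B] [Module.Flat R A] [Algebra.FiniteType B A] {l : ℕ}

theorem exists_isCoordinateSystem_of_isRadical (hA : FreelyResolvable A)
    (hfibre : ∀ (P : Ideal R) [P.IsPrime],
      ∃ Y : Fin l → A, IsCoordinateSystem R B P.primeCompl P Y)
    {I : Ideal R} (hI : I.IsRadical) (hI' : I ≠ ⊤)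
    (ih : ∀ J > I, ∃ r, ∃ Y : Fin (l + r) → MvPolynomial (Fin r) A,
      IsCoordinateSystem R B ⊥ J Y) :
    ∃ r, ∃ Y : Fin (l + r) → MvPolynomial (Fin r) A, IsCoordinateSystem R B ⊥ I Y := by
  have : IsNoetherianRing A := Algebra.FiniteType.isNoetherianRing B A
  obtain ⟨π, hπ, Y, hY⟩ := exists_isCoordinateSystem_powers hI hfibre
  have hlt : I < I ⊔ Ideal.span {π} := by
    refine le_sup_left.lt_of_not_ge fun hle => hI' ((Ideal.eq_top_iff_one I).2 (hπ 1 ?_))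
    rw [mul_one]
    exact hle (Ideal.mem_sup_right (Ideal.mem_span_singleton_self π))
  obtain ⟨r, Z, hZ⟩ := ih _ hlt
  have : Module.Flat R (MvPolynomial (Fin r) A) := .trans R A _
  have : Algebra.FiniteType B (MvPolynomial (Fin r) A) :=
    .trans (S := A) inferInstance inferInstance
  obtain ⟨s, ⟨E⟩⟩ := exists_linearEquiv_kaehlerDifferential (hA.mvPolynomial r) fun P _ =>
    (hfibre P).elim fun _ h => h.mvPolynomial_fin r
  obtain ⟨Y', hY'⟩ := hY.mvPolynomial_fin r
  obtain ⟨r', V, hV⟩ := exists_isCoordinateSystem_of_powers hπ hY' hZ E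
  exact ⟨r' + r, hV.mvPolynomial_add⟩

theorem exists_isCoordinateSystem (hA : FreelyResolvable A)
    (hfibre : ∀ (P : Ideal R) [P.IsPrime],
      ∃ Y : Fin l → A, IsCoordinateSystem R B P.primeCompl P Y) (I : Ideal R) :
    ∃ r, ∃ Y : Fin (l + r) → MvPolynomial (Fin r) A, IsCoordinateSystem R B ⊥ I Y := by
  induction I using WellFoundedGT.induction with
  | ind I ih =>
  by_cases htop : I = ⊤
  · exact ⟨0, 0, htop ▸ isCoordinateSystem_top⟩
  by_cases hI : I.IsRadical
  · exact exists_isCoordinateSystem_of_isRadical hA hfibre hI htop ih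
  · have hlt : I < I.radical :=
      Ideal.le_radical.lt_of_ne fun h => hI (h ▸ Ideal.radical_isRadical I)
    obtain ⟨r, Y, hY⟩ := ih _ hlt
    obtain ⟨k, hk⟩ := Ideal.exists_radical_pow_le_of_fg I (IsNoetherian.noetherian _)
    have : Module.Flat R (MvPolynomial (Fin r) A) := .trans R A _
    exact ⟨r, Y, hY.of_pow_le Ideal.le_radical hk⟩

end Induction

end ResidualVariable

/-! ### Affine fibrations -/

section AffineFibration

open ResidualVariable

variable {R A : Type*} [CommRing R] [CommRing A] [Algebra R A] {n : ℕ}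

theorem IsAffineFibration.freelyResolvable [IsNoetherianRing R] (hR : FreelyResolvable R)
    (hA : IsAffineFibration R A n) : FreelyResolvable A := by
  obtain ⟨_, _, hfibre⟩ := hA
  have : IsNoetherianRing A := Algebra.FiniteType.isNoetherianRing R A
  refine .of_fibres hR fun P hP => ?_
  obtain ⟨Φ⟩ := hfibre P hP
  exact .of_ringEquiv Φ.symm.toRingEquiv (.mvPolynomial .of_isPrincipalIdealRing n)

theorem IsAffineFibration.isDomain [IsDomain R] (hA : IsAffineFibration R A n) : IsDomain A := by
  obtain ⟨_, _, hfibre⟩ := hA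
  obtain ⟨Φ⟩ := hfibre ⊥ Ideal.isPrime_bot
  have : IsDomain ((⊥ : Ideal R).ResidueField ⊗[R] A) := Φ.toMulEquiv.isDomain _
  refine Function.Injective.isDomain (Algebra.TensorProduct.includeRight :
    A →ₐ[R] (⊥ : Ideal R).ResidueField ⊗[R] A) ((injective_iff_map_eq_zero _).2 fun a ha => ?_)
  obtain ⟨d, hd, hda⟩ := exists_notMem_smul_mem_of_one_tmul_eq_zero ⊥ ha
  rw [Submodule.bot_smul, Submodule.mem_bot] at hda
  exact (smul_eq_zero.1 hda).resolve_left hd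

theorem stablyPolynomial_over_adjoin_of_pid_base_general
    {R A : Type*} [CommRing R] [IsDomain R] [IsNoetherianRing R] [CommRing A] [Algebra R A]
    (hR : FreelyResolvable R) {n m : ℕ} (hA : IsAffineFibration R A n)
    {W : Fin m → A} (hW : IsResidualVariable R A n m W) :
    ∃ r s : ℕ,
      Nonempty (MvPolynomial (Fin r) A ≃ₐ[↥(Algebra.adjoin R (Set.range W))]
        MvPolynomial (Fin s) ↥(Algebra.adjoin R (Set.range W))) := by
  let B := Algebra.adjoin R (Set.range W)
  let e : MvPolynomial (Fin m) R ≃ₐ[R] B := hW.1.aevalEquiv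
  have hAresolvable := hA.freelyResolvable hR
  have := hA.isDomain
  obtain ⟨_, _, -⟩ := hA
  have : Algebra.FiniteType R B := .equiv inferInstance e
  have : IsNoetherianRing B := Algebra.FiniteType.isNoetherianRing R B
  have : Module.Flat R B := .of_linearEquiv e.symm.toLinearEquiv
  have : Algebra.FiniteType B A := .of_restrictScalars_finiteType R B A
  obtain ⟨r, Y, hY⟩ := exists_isCoordinateSystem hAresolvable
    (fun P _ => exists_isCoordinateSystem_of_fibersPolynomialOver P hW.2) ⊥
  exact ⟨r, _, hY.nonempty_algEquiv.map AlgEquiv.symm⟩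

end AffineFibration

/-- Let `D` be a PID, `R` a polynomial ring in finitely many variables over `D`,
`A` an `𝔸ⁿ`-fibration over `R` and `W` an `m`-tuple residual variable of `A` over `R`.
Then `A` is a stably polynomial algebra over `R[W]`. -/
theorem stablyPolynomial_over_adjoin_of_pid_base
    (D R A : Type*) [CommRing D] [IsDomain D] [IsPrincipalIdealRing D]
    [CommRing R] [Algebra D R] [CommRing A] [Algebra R A]
    (hR : ∃ k : ℕ, Nonempty (R ≃ₐ[D] MvPolynomial (Fin k) D))
    (n m : ℕ) (hA : IsAffineFibration R A n)
    (W : Fin m → A) (hW : IsResidualVariable R A n m W) :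
    ∃ r s : ℕ,
      Nonempty (MvPolynomial (Fin r) A ≃ₐ[↥(Algebra.adjoin R (Set.range W))]
        MvPolynomial (Fin s) ↥(Algebra.adjoin R (Set.range W))) := by
  obtain ⟨k, ⟨e⟩⟩ := hR
  have : IsDomain R := e.toMulEquiv.isDomain _
  have : IsNoetherianRing R := isNoetherianRing_of_ringEquiv _ e.symm.toRingEquiv
  exact stablyPolynomial_over_adjoin_of_pid_base_general
    (.of_ringEquiv e.symm.toRingEquiv (.mvPolynomial .of_isPrincipalIdealRing k)) hA hW
end

section
/- Let R be a Noetherian commutative ring, A an 𝔸^{m+k}-fibration over R, and W = (W₁,…,W_m) an m-tuple residual variable of A over R. Then Ω_R(A) is isomorphic as an A-module to Ω_{R[W]}(A) ⊕ A^m. In particular, Ω_R(A) is a stably free A-module if and only if Ω_{R[W]}(A) is a stably free A-module. -/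
open TensorProduct

/-!
Let `B = R[W]`. Each fibre of `B → A` over `R` is formally smooth, so a derivation of `B` into a
residue field of `A` extends to `A`; hence at every maximal ideal of `A` there are functionals on
`Ω[A⁄R]` dual to `dW₁, …, dWₘ`. Projectivity of `Ω[A⁄R]` lifts them to `A`-valued functionals, whose
pairing matrix with the `dWⱼ` has determinant `δ` outside the given maximal ideal, and the adjugate
of this matrix turns them into a map `Ω[A⁄R] → Aᵐ` with `dWⱼ ↦ δ eⱼ`. The scalars attained in this
way form an ideal contained in no maximal ideal, so `1` is attained: `eⱼ ↦ dWⱼ` embeds `Aᵐ` in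
`Ω[A⁄R]` as a direct summand, and the quotient is `Ω[A⁄B]`.
-/

section LinearAlgebra

variable {A N Q ι : Type*} [CommRing A] [AddCommGroup N] [Module A N] [AddCommGroup Q] [Module A Q]
  [DecidableEq ι]

lemma exists_linearMap_apply_eq_det_smul_single [Fintype ι] (l : N →ₗ[A] ι → A) (w : ι → N) :
    ∃ r : N →ₗ[A] ι → A, ∀ j,
      r (w j) = (Matrix.of fun i j ↦ l (w j) i).det • Pi.single j 1 := by
  let X : Matrix ι ι A := .of fun i j ↦ l (w j) i
  refine ⟨X.adjugate.mulVecLin ∘ₗ l, fun j ↦ ?_⟩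
  calc X.adjugate.mulVec (l (w j)) = X.adjugate.mulVec (X.mulVec (Pi.single j 1)) := by
        congr 1; ext i; simp [X]
    _ = X.det • Pi.single j 1 := by
        rw [Matrix.mulVec_mulVec, Matrix.adjugate_mul, Matrix.smul_mulVec, Matrix.one_mulVec]

lemma exists_linearMap_apply_eq_single_of_residueField [Finite ι] [Module.Projective A N]
    (w : ι → N)
    (h : ∀ (M : Ideal A) [M.IsMaximal] (i : ι), ∃ l : N →ₗ[A] M.ResidueField,
      ∀ j, l (w j) = (Pi.single i 1 : ι → M.ResidueField) j) :
    ∃ r : N →ₗ[A] ι → A, ∀ j, r (w j) = Pi.single j 1 := by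
  cases nonempty_fintype ι
  let evalAt : (N →ₗ[A] ι → A) →ₗ[A] (ι → ι → A) := LinearMap.pi fun j ↦ LinearMap.applyₗ (w j)
  let J : Ideal A := (LinearMap.range evalAt).comap
    (LinearMap.toSpanSingleton A _ fun j ↦ Pi.single j 1)
  have mem_J {a : A} : a ∈ J ↔ ∃ r : N →ₗ[A] ι → A, ∀ j, r (w j) = a • Pi.single j 1 := by
    simp [J, evalAt, funext_iff]
  suffices J = ⊤ by simpa using mem_J.mp (this ▸ Submodule.mem_top : (1 : A) ∈ J)
  by_contra hJ
  obtain ⟨M, hM, hJM⟩ := J.exists_le_maximal hJ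
  choose l hl using h M
  choose L hL using fun i ↦ Module.projective_lifting_property
    (Algebra.linearMap A M.ResidueField) (l i) M.algebraMap_residueField_surjective
  let X : Matrix ι ι A := .of fun i j ↦ L i (w j)
  have hX : (algebraMap A M.ResidueField).mapMatrix X = 1 := by
    ext i j
    simpa [X, Matrix.one_apply, Pi.single_apply, hl, eq_comm] using
      LinearMap.congr_fun (hL i) (w j)
  have hdet : X.det ∉ M := by
    rw [← Ideal.algebraMap_residueField_eq_zero, RingHom.map_det, hX, Matrix.det_one]
    exact one_ne_zero
  exact hdet (hJM (mem_J.mpr (exists_linearMap_apply_eq_det_smul_single (LinearMap.pi L) w)))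

lemma nonempty_linearEquiv_prod_of_ker_eq_span [Finite ι] {w : ι → N} {p : N →ₗ[A] Q}
    (hp : Function.Surjective p) (hker : LinearMap.ker p = Submodule.span A (Set.range w))
    {r : N →ₗ[A] ι → A} (hr : ∀ j, r (w j) = Pi.single j 1) :
    Nonempty (N ≃ₗ[A] Q × (ι → A)) := by
  cases nonempty_fintype ι
  have hexact : Function.Exact (Fintype.linearCombination A w) p := by
    rw [LinearMap.exact_iff, hker, Fintype.range_linearCombination]
  have hretract : r ∘ₗ Fintype.linearCombination A w = .id := by
    refine LinearMap.pi_ext' fun j ↦ LinearMap.ext_ring ?_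
    simp [Fintype.linearCombination_apply_single, hr]
  exact ⟨(hexact.splitInjectiveEquiv hp ⟨r, hretract⟩).1 ≪≫ₗ LinearEquiv.prodComm A _ _⟩

end LinearAlgebra

section Differentials

open KaehlerDifferential

lemma exists_leftInverse_mapBaseChange (R B A : Type*) [CommRing R] [CommRing B] [CommRing A]
    [Algebra R B] [Algebra R A] [Algebra B A] [IsScalarTower R B A] [Algebra.FormallySmooth B A] :
    ∃ r : Ω[A⁄R] →ₗ[A] A ⊗[B] Ω[B⁄R], r ∘ₗ mapBaseChange R B A = .id := by
  have hinj : Function.Injective (mapBaseChange R B A) := by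
    rw [injective_iff_map_eq_zero]
    intro x hx
    obtain ⟨y, rfl⟩ := (Algebra.H1Cotangent.exact_δ_mapBaseChange R B A x).mp hx
    rw [Subsingleton.elim y 0, map_zero]
  obtain ⟨s, hs⟩ := Module.projective_lifting_property (KaehlerDifferential.map R B A A) .id
    (map_surjective R B A)
  have hsplit := (exact_mapBaseChange_map R B A).split_tfae'.out 0 1
  exact (hsplit.mp ⟨hinj, s, hs⟩).2

lemma exists_derivation_extension_of_formallySmooth {R B A N : Type*} [CommRing R] [CommRing B]
    [CommRing A] [Algebra R B] [Algebra R A] [Algebra B A] [IsScalarTower R B A]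
    [Algebra.FormallySmooth B A] [AddCommGroup N] [Module R N] [Module B N] [Module A N]
    [IsScalarTower B A N] [IsScalarTower R B N] [IsScalarTower R A N]
    (d : Derivation R B N) : ∃ d' : Derivation R A N, ∀ b, d' (algebraMap B A b) = d b := by
  obtain ⟨r, hr⟩ := exists_leftInverse_mapBaseChange R B A
  refine ⟨((d.liftKaehlerDifferential.liftBaseChange A) ∘ₗ r).compDer (D R A), fun b ↦ ?_⟩
  have hrD : r (D R A (algebraMap B A b)) = 1 ⊗ₜ D R B b := by
    simpa using LinearMap.congr_fun hr (1 ⊗ₜ D R B b)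
  simp [hrD]

lemma exists_derivation_extension_of_isPushout {R S B B' N : Type*} [CommRing R] [CommRing S]
    [CommRing B] [CommRing B'] [Algebra R S] [Algebra R B] [Algebra S B'] [Algebra B B']
    [Algebra R B'] [IsScalarTower R S B'] [IsScalarTower R B B'] [Algebra.IsPushout R S B B']
    [AddCommGroup N] [Module R N] [Module S N] [Module B N] [Module B' N] [IsScalarTower B B' N]
    [IsScalarTower S B' N] [IsScalarTower R B N]
    (d : Derivation R B N) : ∃ d' : Derivation S B' N, ∀ b, d' (algebraMap B B' b) = d b := by
  refine ⟨((d.liftKaehlerDifferential.liftBaseChange B') ∘ₗ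
    (tensorKaehlerEquiv R S B B').symm.toLinearMap).compDer (D S B'), fun b ↦ ?_⟩
  have hD : (tensorKaehlerEquiv R S B B').symm (D S B' (algebraMap B B' b)) = 1 ⊗ₜ D R B b := by
    rw [LinearEquiv.symm_apply_eq, tensorKaehlerEquiv_tmul_D, one_smul]
  simp [hD]

/-- The maps `B ⊗_R κ(P) → A ⊗_R κ(P)` induced by `B → A` are formally smooth for all primes `P`
of `R`: the only property of polynomial fibres that the extension of derivations requires. -/
def FibersFormallySmooth (R B A : Type*) [CommRing R] [CommRing B] [CommRing A]
    [Algebra R B] [Algebra R A] [Algebra B A] [IsScalarTower R B A] : Prop :=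
  ∀ (P : Ideal R) [P.IsPrime], (Algebra.TensorProduct.map (AlgHom.id R P.ResidueField)
    (IsScalarTower.toAlgHom R B A)).toRingHom.FormallySmooth

lemma FibersPolynomialOver.fibersFormallySmooth {R B A : Type*} [CommRing R] [CommRing B]
    [CommRing A] [Algebra R B] [Algebra R A] [Algebra B A] [IsScalarTower R B A] {n : ℕ}
    (h : FibersPolynomialOver R B A n) : FibersFormallySmooth R B A := by
  intro P hP
  obtain ⟨e⟩ := h P hP
  algebraize [(Algebra.TensorProduct.map (AlgHom.id R P.ResidueField)
    (IsScalarTower.toAlgHom R B A)).toRingHom]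
  exact Algebra.FormallySmooth.of_equiv e.symm

attribute [local instance] Algebra.TensorProduct.rightAlgebra in
lemma FibersFormallySmooth.exists_derivation_extension {R B A : Type*} [CommRing R]
    [CommRing B] [CommRing A] [Algebra R B] [Algebra R A] [Algebra B A] [IsScalarTower R B A]
    (hfib : FibersFormallySmooth R B A) (M : Ideal A) [M.IsPrime]
    (d : Derivation R B M.ResidueField) :
    ∃ d' : Derivation R A M.ResidueField, ∀ b, d' (algebraMap B A b) = d b := by
  let P : Ideal R := M.under R
  let K := M.ResidueField
  let κ := P.ResidueField
  let f := Algebra.TensorProduct.map (AlgHom.id R κ) (IsScalarTower.toAlgHom R B A)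
  let ρ : κ →ₐ[R] K := Ideal.ResidueField.mapₐ P M (Algebra.ofId R A) rfl
  let φ : κ ⊗[R] A →ₐ[R] K :=
    Algebra.TensorProduct.lift ρ (IsScalarTower.toAlgHom R A K) fun _ _ ↦ .all _ _
  algebraize [ρ.toRingHom, φ.toRingHom, f.toRingHom, φ.toRingHom.comp f.toRingHom]
  have : Algebra.FormallySmooth (κ ⊗[R] B) (κ ⊗[R] A) := hfib P
  have : IsScalarTower B (κ ⊗[R] B) K := .of_algebraMap_eq fun b ↦ by
    simp [RingHom.algebraMap_toAlgebra, φ, f, ← IsScalarTower.algebraMap_apply B A K]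
  have : IsScalarTower κ (κ ⊗[R] B) K := .of_algebraMap_eq fun c ↦ by
    simp [RingHom.algebraMap_toAlgebra, φ, f]
  have : IsScalarTower κ (κ ⊗[R] A) K := .of_algebraMap_eq fun c ↦ by
    simp [RingHom.algebraMap_toAlgebra, φ]
  have : IsScalarTower A (κ ⊗[R] A) K := .of_algebraMap_eq fun c ↦ by
    simp [RingHom.algebraMap_toAlgebra, φ]
  have : IsScalarTower κ (κ ⊗[R] B) (κ ⊗[R] A) := .of_algebraMap_eq fun c ↦ by
    simp [RingHom.algebraMap_toAlgebra, f]
  obtain ⟨d₁, hd₁⟩ := exists_derivation_extension_of_isPushout (S := κ) (B' := κ ⊗[R] B) d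
  obtain ⟨d₂, hd₂⟩ := exists_derivation_extension_of_formallySmooth (A := κ ⊗[R] A) d₁
  refine ⟨(d₂.restrictScalars R).compAlgebraMap A, fun b ↦ ?_⟩
  have hcomm : algebraMap A (κ ⊗[R] A) (algebraMap B A b) =
      algebraMap (κ ⊗[R] B) (κ ⊗[R] A) (algebraMap B (κ ⊗[R] B) b) := by
    simp [RingHom.algebraMap_toAlgebra, f]
  rw [← hd₁, ← hd₂, ← hcomm]
  rfl

lemma FibersFormallySmooth.exists_linearMap_extension {R B A : Type*} [CommRing R]
    [CommRing B] [CommRing A] [Algebra R B] [Algebra R A] [Algebra B A] [IsScalarTower R B A]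
    (hfib : FibersFormallySmooth R B A) (M : Ideal A) [M.IsPrime]
    (l : Ω[B⁄R] →ₗ[B] M.ResidueField) :
    ∃ l' : Ω[A⁄R] →ₗ[A] M.ResidueField, ∀ ω, l' (KaehlerDifferential.map R R B A ω) = l ω := by
  obtain ⟨d, hd⟩ := hfib.exists_derivation_extension M (l.compDer (D R B))
  suffices (d.liftKaehlerDifferential.restrictScalars B) ∘ₗ KaehlerDifferential.map R R B A = l
    from ⟨d.liftKaehlerDifferential, LinearMap.congr_fun this⟩
  refine Derivation.liftKaehlerDifferential_unique _ _ (Derivation.ext fun b ↦ ?_)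
  simp [hd]

lemma ker_map_eq_span_of_basis {R B A ι : Type*} [CommRing R] [CommRing B] [CommRing A]
    [Algebra R B] [Algebra R A] [Algebra B A] [IsScalarTower R B A] (b : Module.Basis ι B Ω[B⁄R]) :
    LinearMap.ker (KaehlerDifferential.map R B A A) =
      Submodule.span A (Set.range fun j ↦ KaehlerDifferential.map R R B A (b j)) := by
  have hbase : mapBaseChange R B A = (KaehlerDifferential.map R R B A).liftBaseChange A := by
    ext; simp
  rw [← range_mapBaseChange, hbase, LinearMap.range_liftBaseChange, LinearMap.range_eq_map,
    ← b.span_eq, Submodule.map_span, Submodule.span_span_of_tower, ← Set.range_comp,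
    Function.comp_def]

lemma nonempty_linearEquiv_kaehlerDifferential_prod {R B A ι : Type*} [CommRing R] [CommRing B]
    [CommRing A] [Algebra R B] [Algebra R A] [Algebra B A] [IsScalarTower R B A]
    [Module.Projective A Ω[A⁄R]] [Finite ι] (b : Module.Basis ι B Ω[B⁄R])
    (hfib : FibersFormallySmooth R B A) : Nonempty (Ω[A⁄R] ≃ₗ[A] Ω[A⁄B] × (ι → A)) := by
  classical
  obtain ⟨r, hr⟩ := exists_linearMap_apply_eq_single_of_residueField
    (fun j ↦ KaehlerDifferential.map R R B A (b j)) fun M _ i ↦ by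
      obtain ⟨l, hl⟩ := hfib.exists_linearMap_extension M (Algebra.linearMap B _ ∘ₗ b.coord i)
      refine ⟨l, fun j ↦ ?_⟩
      rw [hl]
      simp [Finsupp.single_apply, Pi.single_apply, eq_comm]
  exact nonempty_linearEquiv_prod_of_ker_eq_span (map_surjective R B A)
    (ker_map_eq_span_of_basis b) hr

lemma nonempty_basis_kaehlerDifferential_of_mvPolynomial_algEquiv {R B ι : Type*} [CommRing R]
    [CommRing B] [Algebra R B] (e : MvPolynomial ι R ≃ₐ[R] B) :
    Nonempty (Module.Basis ι B Ω[B⁄R]) := by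
  algebraize [e.toRingHom]
  have : IsScalarTower R (MvPolynomial ι R) B := .of_algebraMap_eq fun r ↦ (e.commutes r).symm
  have : Algebra.FormallyEtale (MvPolynomial ι R) B :=
    .of_equiv (AlgEquiv.ofBijective (Algebra.ofId (MvPolynomial ι R) B) e.bijective)
  exact ⟨((mvPolynomialBasis R ι).baseChange B).map
    (tensorKaehlerEquivOfFormallyEtale R (MvPolynomial ι R) B)⟩

end Differentials

section StablyFree

variable {A M N : Type*} [CommRing A] [AddCommGroup M] [Module A M] [AddCommGroup N] [Module A N]

lemma IsStablyFree.of_linearEquiv (e : M ≃ₗ[A] N) : IsStablyFree A M → IsStablyFree A N := by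
  rintro ⟨s, t, ⟨f⟩⟩
  exact ⟨s, t, ⟨e.symm.prodCongr (.refl A _) ≪≫ₗ f⟩⟩

/-- Concatenation of vectors: the rank count behind adding free modules to a stably free one. -/
def finAppendLinearEquiv (A : Type*) [CommRing A] (s t : ℕ) :
    ((Fin s → A) × (Fin t → A)) ≃ₗ[A] (Fin (s + t) → A) :=
  (LinearEquiv.sumArrowLequivProdArrow (Fin s) (Fin t) A A).symm ≪≫ₗ
    LinearEquiv.funCongrLeft A A finSumFinEquiv.symm

lemma isStablyFree_prod_pi_iff {ι : Type*} [Finite ι] :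
    IsStablyFree A (M × (ι → A)) ↔ IsStablyFree A M := by
  obtain ⟨m, ⟨σ⟩⟩ := Finite.exists_equiv_fin ι
  let e : (M × (ι → A)) ≃ₗ[A] M × (Fin m → A) :=
    (LinearEquiv.refl A M).prodCongr (LinearEquiv.funCongrLeft A A σ.symm)
  constructor
  · rintro ⟨s, t, ⟨f⟩⟩
    exact ⟨m + s, t, ⟨(LinearEquiv.refl A M).prodCongr (finAppendLinearEquiv A m s).symm ≪≫ₗ
      (LinearEquiv.prodAssoc A _ _ _).symm ≪≫ₗ e.symm.prodCongr (.refl A _) ≪≫ₗ f⟩⟩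
  · rintro ⟨s, t, ⟨f⟩⟩
    refine .of_linearEquiv e.symm ⟨s, t + m, ⟨?_⟩⟩
    exact LinearEquiv.prodAssoc A _ _ _ ≪≫ₗ
      (LinearEquiv.refl A M).prodCongr (LinearEquiv.prodComm A _ _) ≪≫ₗ
      (LinearEquiv.prodAssoc A _ _ _).symm ≪≫ₗ
      f.prodCongr (.refl A _) ≪≫ₗ finAppendLinearEquiv A t m

end StablyFree

lemma IsAffineFibration.smooth {R A : Type*} [CommRing R] [IsNoetherianRing R] [CommRing A]
    [Algebra R A] {n : ℕ} (hA : IsAffineFibration R A n) : Algebra.Smooth R A := by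
  obtain ⟨hft, hflat, hfib⟩ := hA
  have : Algebra.FinitePresentation R A := Algebra.FinitePresentation.of_finiteType.mp hft
  refine Algebra.Smooth.of_formallySmooth_fiber fun P hP ↦ ?_
  obtain ⟨e⟩ := hfib P hP
  exact Algebra.FormallySmooth.of_equiv e.symm

theorem kaehler_decomposition_of_residualVariable_general
    {R B A ι : Type*} [CommRing R] [CommRing B] [CommRing A] [Algebra R B] [Algebra R A]
    [Algebra B A] [IsScalarTower R B A] [Module.Projective A (KaehlerDifferential R A)] [Finite ι]
    (b : Module.Basis ι B (KaehlerDifferential R B))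
    (hfib : FibersFormallySmooth R B A) :
    Nonempty (KaehlerDifferential R A ≃ₗ[A] KaehlerDifferential B A × (ι → A)) ∧
      (IsStablyFree A (KaehlerDifferential R A) ↔ IsStablyFree A (KaehlerDifferential B A)) := by
  obtain ⟨f⟩ := nonempty_linearEquiv_kaehlerDifferential_prod b hfib
  exact ⟨⟨f⟩, .trans ⟨.of_linearEquiv f, .of_linearEquiv f.symm⟩ isStablyFree_prod_pi_iff⟩

/-- Let `R` be a Noetherian ring, `A` an `𝔸^{m+k}`-fibration over `R` and `W` an
`m`-tuple residual variable of `A` over `R`.  Then `Ω_R(A) ≅ Ω_{R[W]}(A) ⊕ Aᵐ` as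
`A`-modules; in particular `Ω_R(A)` is stably free over `A` if and only if
`Ω_{R[W]}(A)` is stably free over `A`. -/
theorem kaehler_decomposition_of_residualVariable
    (R A : Type*) [CommRing R] [IsNoetherianRing R] [CommRing A] [Algebra R A]
    (m k : ℕ) (hA : IsAffineFibration R A (m + k))
    (W : Fin m → A) (hW : IsResidualVariable R A (m + k) m W) :
    Nonempty ((KaehlerDifferential R A) ≃ₗ[A]
        ((KaehlerDifferential ↥(Algebra.adjoin R (Set.range W)) A) × (Fin m → A))) ∧
      (IsStablyFree A (KaehlerDifferential R A) ↔
        IsStablyFree A (KaehlerDifferential ↥(Algebra.adjoin R (Set.range W)) A)) := by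
  have := hA.smooth
  obtain ⟨b⟩ := nonempty_basis_kaehlerDifferential_of_mvPolynomial_algEquiv hW.1.aevalEquiv
  exact kaehler_decomposition_of_residualVariable_general b hW.2.fibersFormallySmooth
end
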